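/- Let n, d ∈ ℕ, q ∈ ℕ∪{0}, K, d⋆, d* ∈ ℕ, β, r, α ∈ (0,∞), τ ∈ (0,∞], s ∈ [0,∞]. Assume d* ≤ d, d*·q ≤ K·q, and not both α < 1 and τ ≥ 1. Set e := β·(min{1,β})^q. Then there exist a constant c6 ∈ (0,∞) depending only on (d,q,K,d⋆,d*,β,r,τ,α) and an estimator f̂_n based on the i.i.d. sample of size n such that sup{E_{P^⊗n}[E_P(f̂_n)] : P ∈ H^{d,β,r}_{q,K,d*,d⋆} ∩ T^{d,s}_{α,τ}} ≤ c6·(1/n)^{e/(d*/(s+1) + (1+1/(s+1))·e)}, where 1/(s+1) := 0 and d*/(s+1) := 0 when s = ∞. -/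

import Mathlib

open MeasureTheory ENNReal Set

noncomputable section

namespace ZZS

/-! ## Basic geometry -/

/-- The closed unit cube `[0,1]^m`. -/
def cube (m : ℕ) : Set (Fin m → ℝ) := Set.univ.pi fun _ => Set.Icc (0 : ℝ) 1

/-- The open unit cube `(0,1)^m`. -/
def cubeo (m : ℕ) : Set (Fin m → ℝ) := Set.univ.pi fun _ => Set.Ioo (0 : ℝ) 1

/-- The label set `{-1, 1} ⊆ ℝ`. -/
def labels : Set ℝ := {-1, 1}

/-- Euclidean distance on `Fin m → ℝ`. -/
def e2 {m : ℕ} (x z : Fin m → ℝ) : ℝ := Real.sqrt (∑ i, (x i - z i) ^ 2)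

/-! ## Multi-index partial derivatives and Hölder balls -/

/-- Iterated partial derivative along a list of coordinate directions. -/
def pderivList {m : ℕ} : List (Fin m) → ((Fin m → ℝ) → ℝ) → (Fin m → ℝ) → ℝ
  | [], f => f
  | i :: l, f => pderivList l fun x => fderiv ℝ f x (Pi.single i 1)

/-- The canonical list of directions attached to a multi-index. -/
def idxList {m : ℕ} (u : Fin m → ℕ) : List (Fin m) :=
  (List.finRange m).flatMap fun i => List.replicate (u i) i

/-- The partial derivative `D^u f` for a multi-index `u`. -/
def Dm {m : ℕ} (u : Fin m → ℕ) (f : (Fin m → ℝ) → ℝ) : (Fin m → ℝ) → ℝ :=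
  pderivList (idxList u) f

/-- The order `‖u‖₁` of a multi-index `u`. -/
def mord {m : ℕ} (u : Fin m → ℕ) : ℕ := ∑ i, u i

/-- The Hölder-`β` norm of `f`, suprema taken over the set `S` (value in `ℝ≥0∞`). -/
def holderNormOn (m : ℕ) (β : ℝ) (S : Set (Fin m → ℝ)) (f : (Fin m → ℝ) → ℝ) : ℝ≥0∞ :=
  (⨆ (u : Fin m → ℕ) (_ : (mord u : ℝ) < β) (x ∈ S), ENNReal.ofReal |Dm u f x|) +
    ⨆ (u : Fin m → ℕ) (_ : (⌈β⌉ : ℝ) - 1 ≤ (mord u : ℝ) ∧ (mord u : ℝ) < β)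
      (x ∈ S) (z ∈ S) (_ : x ≠ z),
      ENNReal.ofReal |Dm u f x - Dm u f z| /
        ENNReal.ofReal (e2 x z) ^ (β + 1 - (⌈β⌉ : ℝ))

/-- `⌈β - 1⌉`, the number of derivatives required for Hölder-`β` smoothness. -/
def smoothOrder (β : ℝ) : ℕ := ⌈β - 1⌉₊

/-- The Hölder ball `B^β_r([0,1]^m)`:  `⌈β-1⌉`-times continuously differentiable functions on
the interior of the cube (with uniformly continuous derivatives, so that they extend
continuously), with Hölder-`β` norm at most `r`. -/
def HolderBall (m : ℕ) (β r : ℝ) : Set ((Fin m → ℝ) → ℝ) :=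
  {f | ContinuousOn f (cube m) ∧
    ContDiffOn ℝ (smoothOrder β : ℕ∞) f (cubeo m) ∧
    (∀ u : Fin m → ℕ, (mord u : ℝ) < β → UniformContinuousOn (Dm u f) (cubeo m)) ∧
    holderNormOn m β (cubeo m) f ≤ ENNReal.ofReal r}

/-! ## Compositional function classes -/

/-- `G^H_m(dstar, β, r)`: Hölder-`β` functions of `dstar` of the `m` coordinates. -/
def GH (m dstar : ℕ) (β r : ℝ) : Set ((Fin m → ℝ) → ℝ) :=
  {f | ∃ (e : Fin dstar → Fin m) (g : (Fin dstar → ℝ) → ℝ),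
    StrictMono e ∧ g ∈ HolderBall dstar β r ∧ ∀ x ∈ cube m, f x = g fun j => x (e j)}

/-- `G^M_m(dmax)`: maxima of at most `dmax` coordinates. -/
def GM (m dmax : ℕ) : Set ((Fin m → ℝ) → ℝ) :=
  {f | ∃ (I : Finset (Fin m)) (hI : I.Nonempty), I.card ≤ dmax ∧
    ∀ x ∈ cube m, f x = I.sup' hI fun i => x i}

/-- The compositional class `G^CHOM_d(q, K, dmax, dstar, β, r)`. -/
def GCHOM (K dmax dstar : ℕ) (β r : ℝ) : ℕ → (d : ℕ) → Set ((Fin d → ℝ) → ℝ)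
  | 0, d => {f | ∃ h ∈ GH d dstar β r ∪ GM d dmax, ∀ x ∈ cube d, f x = h x}
  | q + 1, d =>
    {f | ∃ (H : (Fin d → ℝ) → Fin K → ℝ) (g : (Fin K → ℝ) → ℝ),
      (∀ j, (fun x => H x j) ∈ GH d dstar β r ∪ GM d dmax) ∧
      (∀ x ∈ cube d, H x ∈ cube K) ∧
      g ∈ GCHOM K dmax dstar β r q K ∧ ∀ x ∈ cube d, f x = g (H x)}

/-- The compositional class `G^CH_d(q, K, dstar, β, r)` (no max-value components). -/
def GCH (K dstar : ℕ) (β r : ℝ) : ℕ → (d : ℕ) → Set ((Fin d → ℝ) → ℝ)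
  | 0, d => {f | ∃ h ∈ GH d dstar β r, ∀ x ∈ cube d, f x = h x}
  | q + 1, d =>
    {f | ∃ (H : (Fin d → ℝ) → Fin K → ℝ) (g : (Fin K → ℝ) → ℝ),
      (∀ j, (fun x => H x j) ∈ GH d dstar β r) ∧
      (∀ x ∈ cube d, H x ∈ cube K) ∧
      g ∈ GCH K dstar β r q K ∧ ∀ x ∈ cube d, f x = g (H x)}

/-! ## Losses, risks, and data distributions -/

/-- The sign function (`sgn 0 = 1`). -/
def sgn (t : ℝ) : ℝ := if 0 ≤ t then 1 else -1

/-- The hinge loss. -/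
def hinge (t : ℝ) : ℝ := max 0 (1 - t)

/-- The truncation operator `T_F`. -/
def trunc (F t : ℝ) : ℝ := min F (max (-F) t)

/-- The joint distribution `P_{η,Q}` on `[0,1]^d × {-1,1}` with input marginal `Q` and
conditional class probability function `η`. -/
def jointMeasure {d : ℕ} (η : (Fin d → ℝ) → ℝ) (Q : Measure (Fin d → ℝ)) :
    Measure ((Fin d → ℝ) × ℝ) :=
  Q.bind fun x =>
    ENNReal.ofReal (η x) • Measure.dirac (x, (1 : ℝ)) +
      ENNReal.ofReal (1 - η x) • Measure.dirac (x, (-1 : ℝ))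

/-- The 0-1 risk (misclassification error). -/
def risk01 {d : ℕ} (P : Measure ((Fin d → ℝ) × ℝ)) (f : (Fin d → ℝ) → ℝ) : ℝ :=
  (P {p | sgn (f p.1) ≠ p.2}).toReal

/-- The infimum of the 0-1 risk over all measurable functions. -/
def bayes01 {d : ℕ} (P : Measure ((Fin d → ℝ) × ℝ)) : ℝ :=
  ⨅ g : {g : (Fin d → ℝ) → ℝ // Measurable g}, risk01 P g.1

/-- The excess 0-1 risk. -/
def excess01 {d : ℕ} (P : Measure ((Fin d → ℝ) × ℝ)) (f : (Fin d → ℝ) → ℝ) : ℝ :=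
  risk01 P f - bayes01 P

/-- The `φ`-risk. -/
def riskPhi {d : ℕ} (φ : ℝ → ℝ) (P : Measure ((Fin d → ℝ) × ℝ)) (f : (Fin d → ℝ) → ℝ) : ℝ :=
  ∫ p, φ (p.2 * f p.1) ∂P

/-- The infimum of the `φ`-risk over all measurable functions. -/
def bayesPhi {d : ℕ} (φ : ℝ → ℝ) (P : Measure ((Fin d → ℝ) × ℝ)) : ℝ :=
  ⨅ g : {g : (Fin d → ℝ) → ℝ // Measurable g}, riskPhi φ P g.1

/-- The excess `φ`-risk. -/
def excessPhi {d : ℕ} (φ : ℝ → ℝ) (P : Measure ((Fin d → ℝ) × ℝ)) (f : (Fin d → ℝ) → ℝ) : ℝ :=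
  riskPhi φ P f - bayesPhi φ P

/-- A Borel probability measure on `[0,1]^d × {-1,1}`, presented by its input marginal `Q`
(a Borel probability measure concentrated on the cube) and its conditional class
probability function `η` (measurable, `[0,1]`-valued);  the measure itself is
`jointMeasure η Q`. -/
structure DataDist (d : ℕ) where
  η : (Fin d → ℝ) → ℝ
  Q : Measure (Fin d → ℝ)
  η_meas : Measurable η
  η_mem : ∀ x, η x ∈ Set.Icc (0 : ℝ) 1
  Q_prob : IsProbabilityMeasure Q
  Q_cube : Q (cube d) = 1

/-- The measure on `[0,1]^d × {-1,1}` associated with a `DataDist`. -/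
def DataDist.P {d : ℕ} (D : DataDist d) : Measure ((Fin d → ℝ) × ℝ) := jointMeasure D.η D.Q

/-- `x ^ s` for `s ∈ [0,∞]`, with the conventions `x ^ ∞ = 0` for `x < 1` and `1 ^ ∞ = 1`. -/
def rpowE (x : ℝ≥0∞) (s : ℝ≥0∞) : ℝ≥0∞ :=
  if s = ∞ then (if x < 1 then 0 else if x = 1 then 1 else ∞) else x ^ s.toReal

/-- The Tsybakov noise class `T^{d,s}_{α,τ}` (noise exponent `s ∈ [0,∞]`,
threshold `τ ∈ (0,∞]`). -/
def Tsybakov (d : ℕ) (s : ℝ≥0∞) (α : ℝ) (τ : ℝ≥0∞) : Set (DataDist d) :=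
  {P | ∀ t : ℝ, 0 < t → ENNReal.ofReal t ≤ τ →
    P.Q ({x | |2 * P.η x - 1| ≤ t} ∩ cube d) ≤ ENNReal.ofReal α * rpowE (ENNReal.ofReal t) s}

/-- The class `H^{d,β,r}_{q,K,dstar,dmax}`: distributions whose conditional class probability
agrees a.s. with a member of `G^CHOM`. -/
def HCHOM (d q K dstar dmax : ℕ) (β r : ℝ) : Set (DataDist d) :=
  {P | ∃ f ∈ GCHOM K dmax dstar β r q d, ∀ᵐ x ∂P.Q, P.η x = f x}

/-- `M_{Λ,d}`: Borel probability measures on `[0,1]^d` with a `[0,Λ]`-valued density with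
respect to Lebesgue measure. -/
def MLam (d : ℕ) (Λ : ℝ) : Set (Measure (Fin d → ℝ)) :=
  {Q | ∃ g : (Fin d → ℝ) → ℝ, Measurable g ∧ (∀ x, g x ∈ Set.Icc 0 Λ) ∧
    Q = (volume.restrict (cube d)).withDensity fun x => ENNReal.ofReal (g x)}

/-- The class `H^{d,β,r,Λ}_{q,K,dstar}`: joint laws `P_{η,Q}` with `η ∈ G^CH` (valued in
`[0,1]`) and `Q ∈ M_{Λ,d}`. -/
def HCHL (d q K dstar : ℕ) (β r Λ : ℝ) : Set (DataDist d) :=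
  {P | (∃ f ∈ GCH K dstar β r q d, (∀ x ∈ cube d, f x ∈ Set.Icc (0 : ℝ) 1) ∧
      ∀ᵐ x ∂P.Q, P.η x = f x) ∧ P.Q ∈ MLam d Λ}

/-- The class `H^{d,β,r}_{q,K,dstar}`: joint laws `P_{η,Q}` with `η ∈ G^CH` (valued in
`[0,1]`) and `Q` an arbitrary Borel probability measure on the cube. -/
def HCH (d q K dstar : ℕ) (β r : ℝ) : Set (DataDist d) :=
  {P | ∃ f ∈ GCH K dstar β r q d, (∀ x ∈ cube d, f x ∈ Set.Icc (0 : ℝ) 1) ∧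
    ∀ᵐ x ∂P.Q, P.η x = f x}

/-! ## Samples and estimators -/

/-- The law of an i.i.d. sample of size `n` from `μ`. -/
def iid {α : Type*} [MeasurableSpace α] (μ : Measure α) : (n : ℕ) → Measure (Fin n → α)
  | 0 => Measure.dirac fun i => i.elim0
  | n + 1 => (iid μ n).bind fun p => μ.map fun a => Fin.snoc p a

/-- An estimator: a rule assigning to each sample of size `n` a function `[0,1]^d → ℝ`. -/
def Estimator (d n : ℕ) := (Fin n → (Fin d → ℝ) × ℝ) → (Fin d → ℝ) → ℝ

/-- (Joint) measurability of an estimator. -/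
def Estimator.Meas {d n : ℕ} (A : Estimator d n) : Prop :=
  Measurable fun p : (Fin n → (Fin d → ℝ) × ℝ) × (Fin d → ℝ) => A p.1 p.2

/-- The expected excess 0-1 risk `E_{P^{⊗n}}[E_P(f̂_n)]` of an estimator. -/
def expectedExcess01 {d : ℕ} (P : Measure ((Fin d → ℝ) × ℝ)) {n : ℕ} (A : Estimator d n) : ℝ :=
  ∫ ω, excess01 P (A ω) ∂iid P n

/-- The covering number `N(F, γ)` (uniform norm over `Ω`), valued in `ℝ≥0∞`. -/
def coveringNumber {X : Type*} (Ω : Set X) (F : Set (X → ℝ)) (γ : ℝ) : ℝ≥0∞ :=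
  ⨅ (A : Finset (X → ℝ))
    (_ : ↑A ⊆ F ∧ ∀ f ∈ F, ∃ g ∈ A, ∀ x ∈ Ω, |f x - g x| ≤ γ),
    (A.card : ℝ≥0∞)

/-- `f` is an empirical `φ`-risk minimizer over `F` for the sample `ω`. -/
def IsERM {d n : ℕ} (φ : ℝ → ℝ) (F : Set ((Fin d → ℝ) → ℝ))
    (ω : Fin n → (Fin d → ℝ) × ℝ) (f : (Fin d → ℝ) → ℝ) : Prop :=
  f ∈ F ∧ ∀ g ∈ F,
    (n : ℝ)⁻¹ * ∑ i, φ ((ω i).2 * f ((ω i).1)) ≤ (n : ℝ)⁻¹ * ∑ i, φ ((ω i).2 * g ((ω i).1))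

/-! ## ReLU neural networks -/

/-- A feedforward ReLU network with input dimension `d`. -/
structure ReLUNet (d : ℕ) where
  L : ℕ
  width : ℕ → ℕ
  W : (i : ℕ) → Fin (width (i + 1)) → Fin (width i) → ℝ
  v : (i : ℕ) → Fin (width i) → ℝ
  h0 : width 0 = d
  hL : width (L + 1) = 1

/-- The `i`-th intermediate layer output `W_i σ_{v_i} ⋯ W_1 σ_{v_1} W_0 x`. -/
def ReLUNet.layer {d : ℕ} (net : ReLUNet d) (x : Fin (net.width 0) → ℝ) :
    (i : ℕ) → Fin (net.width (i + 1)) → ℝ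
  | 0 => fun j => ∑ k, net.W 0 j k * x k
  | i + 1 => fun j => ∑ k, net.W (i + 1) j k * max 0 (net.layer x i k - net.v (i + 1) k)

/-- The real-valued function computed by a ReLU network. -/
def ReLUNet.eval {d : ℕ} (net : ReLUNet d) (x : Fin d → ℝ) : ℝ :=
  net.layer (fun j => x (Fin.cast net.h0 j)) net.L (Fin.cast net.hL.symm 0)

/-- The class `F^NN_d(G, N, S, B, Fb)` of ReLU networks with depth `≤ G`, widths `≤ N`,
at most `S` nonzero parameters, parameter magnitudes `≤ B`, and uniform norm on the cube
`≤ Fb`. -/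
def FNN (d : ℕ) (G N : ℝ) (S : ℝ≥0∞) (B : ℝ) (Fb : ℝ≥0∞) : Set ((Fin d → ℝ) → ℝ) :=
  {f | ∃ net : ReLUNet d,
    (∀ x, f x = net.eval x) ∧
    (net.L : ℝ) ≤ G ∧
    (∀ i ≤ net.L + 1, (net.width i : ℝ) ≤ N) ∧
    ((∑ i ∈ Finset.range (net.L + 1),
        (Nat.card {p : Fin (net.width (i + 1)) × Fin (net.width i) // net.W i p.1 p.2 ≠ 0}
          : ℝ≥0∞)) +
      ∑ i ∈ Finset.range net.L,
        (Nat.card {j : Fin (net.width (i + 1)) // net.v (i + 1) j ≠ 0} : ℝ≥0∞)) ≤ S ∧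
    (∀ i ≤ net.L, ∀ j k, |net.W i j k| ≤ B) ∧
    (∀ i, 1 ≤ i → i ≤ net.L → ∀ j, |net.v i j| ≤ B) ∧
    ∀ x ∈ cube d, ENNReal.ofReal |f x| ≤ Fb}

/-! ## Kullback–Leibler divergence -/

open Classical in
/-- The Kullback–Leibler divergence. -/
def KL {X : Type*} [MeasurableSpace X] (P Q : Measure X) : ℝ≥0∞ :=
  if P ≪ Q ∧ Integrable (fun x => Real.log (P.rnDeriv Q x).toReal) P then
    ENNReal.ofReal (∫ x, Real.log (P.rnDeriv Q x).toReal ∂P)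
  else ∞

/-- The exponent `e / (dstar/(s+1) + (1 + 1/(s+1))·e)` of the minimax rate, for noise
exponent `s ∈ [0,∞]` (equal to `1` when `s = ∞`). -/
def rateExp (dstar : ℕ) (e : ℝ) (s : ℝ≥0∞) : ℝ :=
  if s = ∞ then 1
  else e / ((dstar : ℝ) / (s.toReal + 1) + (1 + 1 / (s.toReal + 1)) * e)

/-!
Suppose that `η` lies in a class whose `ε`-nets in the uniform norm have log-cardinality of order
`ε ^ (-ρ)`, and let `0 < t`. The sign of `2 * g - 1`, for `g` in a net of radius `t / 2` with
`|η - g| ≤ t / 2`, is wrong only where `|2 * η - 1| ≤ t`, so its excess risk is at most `t` times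
the mass of that set. Off that set, an error costs at least `t`, and this bounds the second moment
of an excess loss by `t⁻¹` times its mean, up to the same mass. Empirical risk minimization over the
net therefore converges at the fast rate `log N / (t * n)`, where `N` is the size of the net, and
has expected excess risk of order `t ^ (s + 1) + t ^ (-ρ - 1) / n`, which is minimized over `t`.

For compositions the entropy exponent is `ρ = dstar / e`: uniformly close components have close
compositions, each of the `q` compositions costing at most a Hölder exponent `min 1 β`. The Hölder
ball itself is covered by recording rounded derivatives on dyadic grids from coarse to fine, where
refining the grid once costs a bounded number of choices per cell.
-/

/-! ## The cube -/

theorem isOpen_cubeo (m : ℕ) : IsOpen (cubeo m) :=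
  isOpen_set_pi finite_univ fun _ _ => isOpen_Ioo

theorem convex_cubeo (m : ℕ) : Convex ℝ (cubeo m) :=
  convex_pi fun _ _ => convex_Ioo 0 1

theorem closure_cubeo (m : ℕ) : closure (cubeo m) = cube m := by
  simp [cubeo, cube, closure_pi_set]

theorem measurableSet_cube (m : ℕ) : MeasurableSet (cube m) :=
  (isClosed_set_pi fun _ _ => isClosed_Icc).measurableSet

theorem edist_le_one_of_mem_cube {m : ℕ} {x z : Fin m → ℝ} (hx : x ∈ cube m) (hz : z ∈ cube m) :
    edist x z ≤ 1 := by
  refine edist_pi_le_iff.2 fun i => ?_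
  rw [edist_dist, ← ENNReal.ofReal_one]
  refine ENNReal.ofReal_le_ofReal ((Real.dist_le_of_mem_Icc (hx i trivial) (hz i trivial)).trans ?_)
  rw [sub_zero]

theorem comp_mem_cube {m k : ℕ} {x : Fin m → ℝ} (hx : x ∈ cube m) (e : Fin k → Fin m) :
    (fun j => x (e j)) ∈ cube k :=
  fun j _ => hx (e j) trivial

theorem e2_pos {m : ℕ} {x z : Fin m → ℝ} (h : x ≠ z) : 0 < e2 x z := by
  obtain ⟨i, hi⟩ := Function.ne_iff.1 h
  refine Real.sqrt_pos.2 (Finset.sum_pos' (fun _ _ => sq_nonneg _) ⟨i, Finset.mem_univ i, ?_⟩)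
  have := sub_ne_zero.2 hi
  positivity

theorem e2_le {m : ℕ} (x z : Fin m → ℝ) : e2 x z ≤ m * ‖x - z‖ := by
  refine Real.sqrt_le_iff.2 ⟨by positivity, ?_⟩
  calc ∑ i, (x i - z i) ^ 2 ≤ ∑ _i : Fin m, ‖x - z‖ ^ 2 :=
        Finset.sum_le_sum fun i _ => sq_le_sq' (neg_le_of_abs_le (norm_le_pi_norm (x - z) i))
          (le_of_abs_le (norm_le_pi_norm (x - z) i))
    _ = m * ‖x - z‖ ^ 2 := by simp
    _ ≤ (m * ‖x - z‖) ^ 2 := by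
        rw [mul_pow]
        gcongr
        exact_mod_cast Nat.le_self_pow two_ne_zero m

theorem e2_rpow_le {m : ℕ} (hm : 0 < m) {γ : ℝ} (hγ₀ : 0 ≤ γ) (hγ₁ : γ ≤ 1)
    (x z : Fin m → ℝ) : e2 x z ^ γ ≤ m * ‖x - z‖ ^ γ := by
  calc e2 x z ^ γ ≤ (m * ‖x - z‖) ^ γ := Real.rpow_le_rpow (Real.sqrt_nonneg _) (e2_le x z) hγ₀
    _ = (m : ℝ) ^ γ * ‖x - z‖ ^ γ := Real.mul_rpow (by positivity) (norm_nonneg _)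
    _ ≤ m * ‖x - z‖ ^ γ := by
        gcongr
        exact Real.rpow_le_self_of_one_le (by exact_mod_cast hm) hγ₁

/-! ## Iterated partial derivatives -/

section Partial

variable {m : ℕ} {S : Set (Fin m → ℝ)} {f g : (Fin m → ℝ) → ℝ}

theorem pderivList_append (l l' : List (Fin m)) (f : (Fin m → ℝ) → ℝ) :
    pderivList (l ++ l') f = pderivList l' (pderivList l f) := by
  induction l generalizing f with
  | nil => rfl
  | cons i _ ih => exact ih _

theorem pderivList_congr (hS : IsOpen S) (l : List (Fin m)) (h : EqOn f g S) :
    EqOn (pderivList l f) (pderivList l g) S := by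
  induction l generalizing f g with
  | nil => exact h
  | cons i _ ih =>
    refine ih fun x hx => ?_
    simp only [(Filter.eventuallyEq_of_mem (hS.mem_nhds hx) h).fderiv_eq]

theorem contDiffOn_fderiv_apply {k : ℕ} (hS : IsOpen S)
    (hf : ContDiffOn ℝ ((k + 1 : ℕ) : ℕ∞) f S) (v : Fin m → ℝ) :
    ContDiffOn ℝ (k : ℕ∞) (fun x => fderiv ℝ f x v) S :=
  (hf.fderiv_of_isOpen hS (m := (k : ℕ∞)) (by norm_cast)).clm_apply contDiffOn_const

theorem contDiffOn_pderivList {k : ℕ} (hS : IsOpen S) (l : List (Fin m))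
    (hf : ContDiffOn ℝ ((k + l.length : ℕ) : ℕ∞) f S) :
    ContDiffOn ℝ (k : ℕ∞) (pderivList l f) S := by
  induction l generalizing f with
  | nil => exact hf
  | cons i _ ih => exact ih (contDiffOn_fderiv_apply hS hf _)

theorem fderiv_fderiv_apply_comm (hS : IsOpen S) (hf : ContDiffOn ℝ 2 f S) (v w : Fin m → ℝ) :
    EqOn (fun x => fderiv ℝ (fun y => fderiv ℝ f y v) x w)
      (fun x => fderiv ℝ (fun y => fderiv ℝ f y w) x v) S := by
  intro x hx
  have hfx : ContDiffAt ℝ 2 f x := hf.contDiffAt (hS.mem_nhds hx)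
  have hd : DifferentiableAt ℝ (fderiv ℝ f) x :=
    (hfx.fderiv_right (m := 1) (by norm_num)).differentiableAt (by simp)
  have hsecond : ∀ u u' : Fin m → ℝ,
      fderiv ℝ (fun y => fderiv ℝ f y u) x u' = fderiv ℝ (fderiv ℝ f) x u' u := fun u u' => by
    rw [fderiv_clm_apply hd (differentiableAt_const u)]
    simp
  simp only [hsecond]
  exact (hfx.isSymmSndFDerivAt (by simp)).eq w v

theorem pderivList_perm (hS : IsOpen S) {l l' : List (Fin m)} (h : l.Perm l')
    (hf : ContDiffOn ℝ (l.length : ℕ∞) f S) : EqOn (pderivList l f) (pderivList l' f) S := by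
  induction h generalizing f with
  | nil => exact fun _ _ => rfl
  | cons i _ ih => exact ih (contDiffOn_fderiv_apply hS hf _)
  | swap i j l =>
    refine pderivList_congr hS l (fderiv_fderiv_apply_comm hS (hf.of_le ?_) _ _)
    have : 2 ≤ (j :: i :: l).length := by simp
    exact WithTop.coe_le_coe.2 (show (2 : ℕ∞) ≤ _ by exact_mod_cast this)
  | trans h₁ _ ih₁ ih₂ => exact (ih₁ hf).trans (ih₂ (by rwa [← h₁.length_eq]))

theorem count_idxList (u : Fin m → ℕ) (i : Fin m) : (idxList u).count i = u i := by
  have hcount : (List.count i ∘ fun j => List.replicate (u j) j) =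
      fun j => if j = i then u j else 0 := by
    funext j
    simp [List.count_replicate]
  rw [idxList, List.count_flatMap, hcount, ← List.ofFn_eq_map, List.sum_ofFn]
  simp

theorem mord_count (l : List (Fin m)) : mord (fun i => l.count i) = l.length := by
  simpa [mord] using
    Multiset.sum_count_eq_card (s := Finset.univ) (m := (l : Multiset (Fin m))) (by simp)

theorem pderivList_eq_Dm (hS : IsOpen S) (l : List (Fin m))
    (hf : ContDiffOn ℝ (l.length : ℕ∞) f S) :
    EqOn (pderivList l f) (Dm (fun i => l.count i) f) S :=
  pderivList_perm hS (List.perm_iff_count.2 fun i => (count_idxList (fun i => l.count i) i).symm) hf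

end Partial

/-! ## Jets of Hölder functions -/

/-- `F`, a family of functions indexed by lists of directions, behaves on `S` like the partial
derivatives of order at most `k` of a function that is Hölder of order `β`: differentiating
appends a direction, and the members of order `k` are `(β - k)`-Hölder with constant `R`. -/
structure IsJet {d : ℕ} (S : Set (Fin d → ℝ)) (k : ℕ) (β R : ℝ)
    (F : List (Fin d) → (Fin d → ℝ) → ℝ) : Prop where
  differentiableAt : ∀ l : List (Fin d), l.length < k → ∀ x ∈ S, DifferentiableAt ℝ (F l) x
  fderiv_single : ∀ l : List (Fin d), l.length < k → ∀ x ∈ S, ∀ i,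
    fderiv ℝ (F l) x (Pi.single i 1) = F (l ++ [i]) x
  abs_sub_le_rpow : ∀ l : List (Fin d), l.length = k → ∀ x ∈ S, ∀ z ∈ S,
    |F l x - F l z| ≤ R * ‖x - z‖ ^ (β - k)

theorem opNorm_le_sum_abs_apply_single {ι : Type*} [Fintype ι] [DecidableEq ι]
    (L : (ι → ℝ) →L[ℝ] ℝ) : ‖L‖ ≤ ∑ i, |L (Pi.single i 1)| := by
  refine L.opNorm_le_bound (Finset.sum_nonneg fun _ _ => abs_nonneg _) fun x => ?_
  have hx : L x = ∑ i, L (Pi.single i 1) * x i := by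
    conv_lhs => rw [pi_eq_sum_univ' x]
    simp [map_sum, mul_comm]
  rw [hx, Finset.sum_mul]
  refine (norm_sum_le _ _).trans (Finset.sum_le_sum fun i _ => ?_)
  rw [norm_mul, Real.norm_eq_abs (L _)]
  exact mul_le_mul_of_nonneg_left (norm_le_pi_norm x i) (abs_nonneg _)

/-- The constant by which an order-`h ^ (β - |l|)` bound on a jet at a point deteriorates within
distance `h`, for derivatives `j` orders below the top; `R` is the Hölder constant of the top
order. -/
def jetConst (d : ℕ) (R : ℝ) : ℕ → ℝ
  | 0 => 1 + R
  | j + 1 => 1 + jetConst d R j + d * jetConst d R j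

theorem jetConst_nonneg (d : ℕ) {R : ℝ} (hR : 0 ≤ R) (j : ℕ) : 0 ≤ jetConst d R j := by
  induction j with
  | zero => exact add_nonneg zero_le_one hR
  | succ j ih => unfold jetConst; positivity

theorem jetConst_mono (d : ℕ) {R : ℝ} (hR : 0 ≤ R) : Monotone (jetConst d R) := by
  refine monotone_nat_of_le_succ fun j => ?_
  have h₁ := mul_nonneg (Nat.cast_nonneg (α := ℝ) d) (jetConst_nonneg d hR j)
  have h₂ : jetConst d R (j + 1) = 1 + jetConst d R j + d * jetConst d R j := rfl
  linarith

namespace IsJet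

variable {d k : ℕ} {S : Set (Fin d → ℝ)} {β R R' : ℝ} {F G : List (Fin d) → (Fin d → ℝ) → ℝ}

theorem sub (hF : IsJet S k β R F) (hG : IsJet S k β R' G) :
    IsJet S k β (R + R') fun l x => F l x - G l x where
  differentiableAt l hl x hx :=
    (hF.differentiableAt l hl x hx).sub (hG.differentiableAt l hl x hx)
  fderiv_single l hl x hx i := by
    rw [fderiv_fun_sub (hF.differentiableAt l hl x hx) (hG.differentiableAt l hl x hx),
      sub_apply, hF.fderiv_single l hl x hx, hG.fderiv_single l hl x hx]
  abs_sub_le_rpow l hl x hx z hz := by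
    rw [add_mul, sub_sub_sub_comm]
    exact (abs_sub _ _).trans
      (add_le_add (hF.abs_sub_le_rpow l hl x hx z hz) (hG.abs_sub_le_rpow l hl x hx z hz))

theorem abs_sub_le_of_abs_le (hF : IsJet S k β R F) {T : Set (Fin d → ℝ)} (hT : Convex ℝ T)
    (hTS : T ⊆ S) {l : List (Fin d)} (hl : l.length < k) {B : ℝ}
    (hB : ∀ i, ∀ x ∈ T, |F (l ++ [i]) x| ≤ B) {x z : Fin d → ℝ} (hx : x ∈ T) (hz : z ∈ T) :
    |F l x - F l z| ≤ d * B * ‖x - z‖ := by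
  refine hT.norm_image_sub_le_of_norm_fderiv_le (𝕜 := ℝ)
    (fun y hy => hF.differentiableAt l hl y (hTS hy)) (fun y hy => ?_) hz hx
  calc ‖fderiv ℝ (F l) y‖ ≤ ∑ i, |fderiv ℝ (F l) y (Pi.single i 1)| :=
        opNorm_le_sum_abs_apply_single _
    _ ≤ ∑ _i : Fin d, B := Finset.sum_le_sum fun i _ => by
        rw [hF.fderiv_single l hl y (hTS hy) i]
        exact hB i y hy
    _ = d * B := by simp

theorem abs_le_of_abs_le (hF : IsJet S k β R F) (hS : Convex ℝ S) (hkβ : k ≤ β) (hR : 0 ≤ R)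
    {p : Fin d → ℝ} (hp : p ∈ S) {h : ℝ} (hh : 0 < h)
    (hFp : ∀ l : List (Fin d), l.length ≤ k → |F l p| ≤ h ^ (β - l.length))
    (j : ℕ) {l : List (Fin d)} (hl : l.length + j = k) {x : Fin d → ℝ} (hx : x ∈ S)
    (hxp : ‖x - p‖ ≤ h) : |F l x| ≤ jetConst d R j * h ^ (β - l.length) := by
  have htriangle : ∀ l x, |F l x| ≤ |F l p| + |F l x - F l p| := fun l x => by
    simpa using abs_add_le (F l p) (F l x - F l p)
  induction j generalizing l x with
  | zero =>
    obtain rfl : l.length = k := by omega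
    have hdiff : |F l x - F l p| ≤ R * h ^ (β - l.length) :=
      (hF.abs_sub_le_rpow l rfl x hx p hp).trans (by gcongr)
    calc |F l x| ≤ h ^ (β - l.length) + R * h ^ (β - l.length) :=
          (htriangle l x).trans (add_le_add (hFp l le_rfl) hdiff)
      _ = jetConst d R 0 * h ^ (β - l.length) := by simp only [jetConst]; ring
  | succ j ih =>
    have hJ := jetConst_nonneg d hR j
    have hderiv : ∀ i, ∀ y ∈ S ∩ Metric.closedBall p h,
        |F (l ++ [i]) y| ≤ jetConst d R j * h ^ (β - l.length - 1) := fun i y hy => by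
      have := ih (l := l ++ [i]) (by grind) hy.1 (mem_closedBall_iff_norm.1 hy.2)
      simpa [sub_add_eq_sub_sub] using this
    have hdiff := hF.abs_sub_le_of_abs_le (hS.inter (convex_closedBall p h)) inter_subset_left
      (by omega) hderiv ⟨hx, mem_closedBall_iff_norm.2 hxp⟩ ⟨hp, Metric.mem_closedBall_self hh.le⟩
    calc |F l x| ≤ h ^ (β - l.length) + d * (jetConst d R j * h ^ (β - l.length - 1)) * h :=
          (htriangle l x).trans (add_le_add (hFp l (by omega)) (hdiff.trans (by gcongr)))
      _ = (1 + d * jetConst d R j) * h ^ (β - l.length) := by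
          rw [Real.rpow_sub_one hh.ne']
          field_simp
      _ ≤ jetConst d R (j + 1) * h ^ (β - l.length) := by
          gcongr
          simp only [jetConst]
          linarith

end IsJet

theorem cast_smoothOrder {β : ℝ} (hβ : 0 < β) : (smoothOrder β : ℝ) = ⌈β⌉ - 1 := by
  have hceil : 0 < ⌈β⌉ := Int.ceil_pos.2 hβ
  have hint : ((smoothOrder β : ℕ) : ℤ) = ⌈β⌉ - 1 := by
    rw [smoothOrder, ← Int.ceil_toNat, Int.ceil_sub_one, Int.toNat_of_nonneg (by omega)]
  exact_mod_cast congrArg (Int.cast (R := ℝ)) hint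

theorem smoothOrder_lt {β : ℝ} (hβ : 0 < β) : (smoothOrder β : ℝ) < β := by
  rw [cast_smoothOrder hβ]
  linarith [Int.ceil_lt_add_one β]

theorem le_smoothOrder_add_one {β : ℝ} (hβ : 0 < β) : β ≤ smoothOrder β + 1 := by
  rw [cast_smoothOrder hβ]
  linarith [Int.le_ceil β]

namespace HolderBall

variable {d : ℕ} {β r : ℝ} {f : (Fin d → ℝ) → ℝ}

theorem abs_pderivList_le (hβ : 0 < β) (hr : 0 ≤ r) (hf : f ∈ HolderBall d β r)
    {l : List (Fin d)} (hl : l.length ≤ smoothOrder β) {x : Fin d → ℝ} (hx : x ∈ cubeo d) :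
    |pderivList l f x| ≤ r := by
  obtain ⟨-, hf_smooth, -, hf_norm⟩ := hf
  rw [pderivList_eq_Dm (isOpen_cubeo d) l (hf_smooth.of_le (by exact_mod_cast hl)) hx]
  have horder : (mord (fun i => l.count i) : ℝ) < β := by
    rw [mord_count]
    exact lt_of_le_of_lt (by exact_mod_cast hl) (smoothOrder_lt hβ)
  have hsup := (le_add_right le_rfl).trans hf_norm
  simp only [iSup_le_iff] at hsup
  exact (ENNReal.ofReal_le_ofReal_iff hr).1 (hsup _ horder x hx)

theorem abs_pderivList_sub_le_e2 (hβ : 0 < β) (hr : 0 ≤ r) (hf : f ∈ HolderBall d β r)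
    {l : List (Fin d)} (hl : l.length = smoothOrder β) {x z : Fin d → ℝ} (hx : x ∈ cubeo d)
    (hz : z ∈ cubeo d) :
    |pderivList l f x - pderivList l f z| ≤ r * e2 x z ^ (β - smoothOrder β) := by
  obtain ⟨-, hf_smooth, -, hf_norm⟩ := hf
  rcases eq_or_ne x z with rfl | hxz
  · rw [sub_self, abs_zero]
    exact mul_nonneg hr (Real.rpow_nonneg (Real.sqrt_nonneg _) _)
  have hDm := pderivList_eq_Dm (isOpen_cubeo d) l (by rwa [hl])
  rw [hDm hx, hDm hz]
  have horder : (⌈β⌉ : ℝ) - 1 ≤ (mord (fun i => l.count i) : ℝ) ∧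
      (mord (fun i => l.count i) : ℝ) < β := by
    rw [mord_count, hl, ← cast_smoothOrder hβ]
    exact ⟨le_rfl, smoothOrder_lt hβ⟩
  have hsup := (le_add_left le_rfl).trans hf_norm
  simp only [iSup_le_iff] at hsup
  have hquot := hsup _ horder x hx z hz hxz
  have hγ : β + 1 - (⌈β⌉ : ℝ) = β - smoothOrder β := by rw [cast_smoothOrder hβ]; ring
  have he := Real.rpow_pos_of_pos (e2_pos hxz) (β - smoothOrder β)
  rwa [hγ, ENNReal.ofReal_rpow_of_pos (e2_pos hxz), ← ENNReal.ofReal_div_of_pos he,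
    ENNReal.ofReal_le_ofReal_iff hr, div_le_iff₀ he] at hquot

theorem isJet (hd : 0 < d) (hβ : 0 < β) (hr : 0 ≤ r) (hf : f ∈ HolderBall d β r) :
    IsJet (cubeo d) (smoothOrder β) β (r * d) fun l => pderivList l f where
  differentiableAt l hl x hx := by
    have hf_smooth : ContDiffOn ℝ ((1 + l.length : ℕ) : ℕ∞) f (cubeo d) :=
      hf.2.1.of_le (by exact_mod_cast (by omega : 1 + l.length ≤ smoothOrder β))
    exact ((contDiffOn_pderivList (isOpen_cubeo d) l hf_smooth).contDiffAt
      ((isOpen_cubeo d).mem_nhds hx)).differentiableAt (by simp)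
  fderiv_single l _ x _ i := by
    rw [pderivList_append]
    rfl
  abs_sub_le_rpow l hl x hx z hz := by
    refine (abs_pderivList_sub_le_e2 hβ hr hf hl hx hz).trans ?_
    rw [mul_assoc]
    have h₁ := smoothOrder_lt hβ
    have h₂ := le_smoothOrder_add_one hβ
    exact mul_le_mul_of_nonneg_left (e2_rpow_le hd (by linarith) (by linarith) x z) hr

end HolderBall

/-! ## Nets and colourings -/

/-- `𝓕` has a nonempty `ε`-net of measurable functions, in the uniform norm on `Ω`, whose
cardinality has logarithm at most `L`; the net need not consist of members of `𝓕`. -/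
def HasNet {X : Type*} [MeasurableSpace X] (Ω : Set X) (𝓕 : Set (X → ℝ)) (ε L : ℝ) : Prop :=
  ∃ G : Finset (X → ℝ), G.Nonempty ∧ (∀ g ∈ G, Measurable g) ∧ Real.log G.card ≤ L ∧
    ∀ f ∈ 𝓕, ∃ g ∈ G, ∀ x ∈ Ω, |f x - g x| ≤ ε

/-- The metric entropy of `𝓕` on `Ω` at scales `ε ≤ 1` is of order at most `ε ^ (-ρ)`. -/
def HasPolyEntropy {X : Type*} [MeasurableSpace X] (Ω : Set X) (𝓕 : Set (X → ℝ)) (ρ : ℝ) : Prop :=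
  ∃ C : ℝ, 0 ≤ C ∧ ∀ ε : ℝ, 0 < ε → ε ≤ 1 → HasNet Ω 𝓕 ε (C * ε ^ (-ρ))

/-- `S` can be coloured with at most `N` colours so that equally coloured members are related
by `R`: the combinatorial form of a covering by `N` sets that are small in the sense of `R`. -/
def HasColoring {α : Type*} (S : Set α) (R : α → α → Prop) (N : ℕ) : Prop :=
  ∃ (κ : Type) (_ : Fintype κ) (c : α → κ), Fintype.card κ ≤ N ∧
    ∀ f ∈ S, ∀ g ∈ S, c f = c g → R f g

namespace HasColoring

variable {α : Type*} {S : Set α} {R R' : α → α → Prop} {N N' : ℕ}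

theorem mono (h : HasColoring S R N) (hR : ∀ f ∈ S, ∀ g ∈ S, R f g → R' f g) (hN : N ≤ N') :
    HasColoring S R' N' := by
  obtain ⟨κ, _, c, hcard, hc⟩ := h
  exact ⟨κ, _, c, hcard.trans hN, fun f hf g hg hfg => hR f hf g hg (hc f hf g hg hfg)⟩

/-- Within a colour class, only the bounded differences of the codes to the code of a fixed
representative have to be recorded. -/
theorem refine [Nonempty α] {P : Type} [Fintype P] {B : ℕ} (h : HasColoring S R N)
    (code : α → P → ℤ) (hcode : ∀ f ∈ S, ∀ g ∈ S, R f g → ∀ p, |code f p - code g p| ≤ B) :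
    HasColoring S (fun f g => code f = code g) (N * (2 * B + 1) ^ Fintype.card P) := by
  classical
  obtain ⟨κ, _, c, hcard, hc⟩ := h
  let rep : κ → α := Function.invFunOn c S
  have hB : (-B : ℤ) ≤ B := by omega
  refine ⟨κ × (P → Icc (-B : ℤ) B), inferInstance,
    fun f => (c f, fun p => projIcc _ _ hB (code f p - code (rep (c f)) p)), ?_,
    fun f hf g hg hfg => ?_⟩
  · have hIcc : Fintype.card (Icc (-B : ℤ) B) = 2 * B + 1 := by
      rw [Fintype.card_of_finset' (p := Icc (-B : ℤ) B) (Finset.Icc (-B : ℤ) B)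
        fun _ => Finset.mem_Icc, Int.card_Icc]
      omega
    rw [Fintype.card_prod, Fintype.card_fun, hIcc]
    gcongr
  · obtain ⟨hcfg, hdiff⟩ := Prod.ext_iff.1 hfg
    have hmem : ∀ f ∈ S, ∀ p, code f p - code (rep (c f)) p ∈ Icc (-B : ℤ) B := by
      intro f hf p
      obtain ⟨hrep_mem, hrep⟩ := Function.invFunOn_pos (⟨f, hf, rfl⟩ : ∃ a ∈ S, c a = c f)
      exact abs_le.1 (hcode f hf _ hrep_mem (hc f hf _ hrep_mem hrep.symm) p)
    funext p
    have hp := congrArg Subtype.val (congrFun hdiff p)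
    simp only [projIcc_of_mem _ (hmem f hf p), projIcc_of_mem _ (hmem g hg p)] at hp
    rw [show c f = c g from hcfg] at hp
    omega

theorem hasNet {X : Type*} [MeasurableSpace X] {Ω : Set X} {S : Set (X → ℝ)}
    {R : (X → ℝ) → (X → ℝ) → Prop} {ε : ℝ} (h : HasColoring S R N)
    (hR : ∀ f ∈ S, ∀ g ∈ S, R f g → ∀ x ∈ Ω, |f x - g x| ≤ ε)
    (hS : ∀ f ∈ S, ∃ f' : X → ℝ, Measurable f' ∧ EqOn f' f Ω) : HasNet Ω S ε (Real.log N) := by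
  classical
  obtain ⟨κ, _, c, hcard, hc⟩ := h
  have hrep : ∀ i, ∃ g : X → ℝ, Measurable g ∧ ∀ f ∈ S, c f = i → ∀ x ∈ Ω, |f x - g x| ≤ ε := by
    intro i
    by_cases hi : ∃ g ∈ S, c g = i
    · obtain ⟨g, hg, hgi⟩ := hi
      obtain ⟨g', hg'_meas, hg'⟩ := hS g hg
      refine ⟨g', hg'_meas, fun f hf hfi x hx => ?_⟩
      rw [hg' hx]
      exact hR f hf g hg (hc f hf g hg (hfi.trans hgi.symm)) x hx
    · exact ⟨0, measurable_zero, fun f hf hfi => absurd ⟨f, hf, hfi⟩ hi⟩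
  choose g hg_meas hg using hrep
  have hne : (Finset.univ.image g).Nonempty :=
    ⟨g (c 0), Finset.mem_image_of_mem g (Finset.mem_univ _)⟩
  refine ⟨Finset.univ.image g, hne, ?_, ?_, fun f hf =>
    ⟨g (c f), Finset.mem_image_of_mem g (Finset.mem_univ _), hg _ f hf rfl⟩⟩
  · simpa using hg_meas
  · refine Real.log_le_log (by exact_mod_cast hne.card_pos) ?_
    exact_mod_cast Finset.card_image_le.trans hcard

end HasColoring

section Net

variable {X : Type*} [MeasurableSpace X] {Ω : Set X} {𝓕 𝓕' : Set (X → ℝ)} {ε ε' L L' ρ ρ' : ℝ}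

theorem HasNet.mono (h : HasNet Ω 𝓕 ε L) (hε : ε ≤ ε') (hL : L ≤ L') : HasNet Ω 𝓕 ε' L' := by
  obtain ⟨G, hne, hmeas, hcard, hG⟩ := h
  refine ⟨G, hne, hmeas, hcard.trans hL, fun f hf => ?_⟩
  obtain ⟨g, hg, hfg⟩ := hG f hf
  exact ⟨g, hg, fun x hx => (hfg x hx).trans hε⟩

theorem HasNet.union (h : HasNet Ω 𝓕 ε L) (h' : HasNet Ω 𝓕' ε L') :
    HasNet Ω (𝓕 ∪ 𝓕') ε (L + L' + Real.log 2) := by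
  classical
  obtain ⟨G, hne, hmeas, hcard, hG⟩ := h
  obtain ⟨G', hne', hmeas', hcard', hG'⟩ := h'
  refine ⟨G ∪ G', hne.mono Finset.subset_union_left,
    fun g hg => (Finset.mem_union.1 hg).elim (hmeas g) (hmeas' g), ?_, ?_⟩
  · have h₀ := hne.card_pos
    have h₀' := hne'.card_pos
    have hle : (G ∪ G').card ≤ G.card * G'.card * 2 :=
      (Finset.card_union_le _ _).trans (by nlinarith)
    calc Real.log (G ∪ G').card ≤ Real.log (G.card * G'.card * 2) := by
          refine Real.log_le_log ?_ (by exact_mod_cast hle)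
          exact_mod_cast (hne.mono Finset.subset_union_left).card_pos
      _ = Real.log G.card + Real.log G'.card + Real.log 2 := by
          rw [Real.log_mul (by positivity) two_ne_zero,
            Real.log_mul (by positivity) (by positivity)]
      _ ≤ L + L' + Real.log 2 := by gcongr
  · rintro f (hf | hf)
    · obtain ⟨g, hg, hfg⟩ := hG f hf
      exact ⟨g, Finset.mem_union_left _ hg, hfg⟩
    · obtain ⟨g, hg, hfg⟩ := hG' f hf
      exact ⟨g, Finset.mem_union_right _ hg, hfg⟩

theorem HasNet.of_eqOn (h : HasNet Ω 𝓕 ε L) (h𝓕 : ∀ f ∈ 𝓕', ∃ g ∈ 𝓕, EqOn f g Ω) :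
    HasNet Ω 𝓕' ε L := by
  obtain ⟨G, hne, hmeas, hcard, hG⟩ := h
  refine ⟨G, hne, hmeas, hcard, fun f hf => ?_⟩
  obtain ⟨f', hf', hff'⟩ := h𝓕 f hf
  obtain ⟨g, hg, hfg⟩ := hG f' hf'
  exact ⟨g, hg, fun x hx => by rw [hff' hx]; exact hfg x hx⟩

/-- Pulling back along `φ i`, one of finitely many inner maps, costs only the logarithm of their
number. -/
theorem HasNet.comp_finite {Y : Type*} [MeasurableSpace Y] {Ω' : Set Y} {𝓖 : Set (Y → ℝ)}
    (h : HasNet Ω' 𝓖 ε L) {ι : Type*} [Finite ι] [Nonempty ι] {φ : ι → X → Y}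
    (hφ_meas : ∀ i, Measurable (φ i)) (hφ : ∀ i, MapsTo (φ i) Ω Ω') :
    HasNet Ω {f | ∃ i, ∃ g ∈ 𝓖, f = g ∘ φ i} ε (Real.log (Nat.card ι) + L) := by
  classical
  have := Fintype.ofFinite ι
  obtain ⟨G, hne, hmeas, hcard, hG⟩ := h
  have hne_image : ((Finset.univ ×ˢ G).image fun p : ι × (Y → ℝ) => p.2 ∘ φ p.1).Nonempty :=
    (Finset.univ_nonempty.product hne).image _
  refine ⟨_, hne_image, ?_, ?_, ?_⟩
  · simp only [Finset.forall_mem_image, Finset.mem_product]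
    exact fun p hp => (hmeas _ hp.2).comp (hφ_meas _)
  · calc Real.log _ ≤ Real.log (Nat.card ι * G.card) := by
          refine Real.log_le_log (by exact_mod_cast hne_image.card_pos) ?_
          rw [Nat.card_eq_fintype_card, ← Finset.card_univ, ← Nat.cast_mul, ← Finset.card_product]
          exact Nat.cast_le.2 Finset.card_image_le
      _ = Real.log (Nat.card ι) + Real.log G.card :=
          Real.log_mul (Nat.cast_ne_zero.2 Nat.card_pos.ne') (Nat.cast_ne_zero.2 hne.card_ne_zero)
      _ ≤ Real.log (Nat.card ι) + L := by gcongr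
  · rintro _ ⟨i, g, hg, rfl⟩
    obtain ⟨g', hg', hgg'⟩ := hG g hg
    exact ⟨_, Finset.mem_image_of_mem _ (Finset.mk_mem_product (Finset.mem_univ i) hg'),
      fun x hx => hgg' _ (hφ i hx)⟩

theorem one_le_rpow_neg (hε : 0 < ε) (hε₁ : ε ≤ 1) (hρ : 0 ≤ ρ) : 1 ≤ ε ^ (-ρ) :=
  Real.one_le_rpow_of_pos_of_le_one_of_nonpos hε hε₁ (by linarith)

theorem HasPolyEntropy.mono (h : HasPolyEntropy Ω 𝓕 ρ) (hρ : ρ ≤ ρ') :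
    HasPolyEntropy Ω 𝓕 ρ' := by
  obtain ⟨C, hC, hnet⟩ := h
  refine ⟨C, hC, fun ε hε hε₁ => (hnet ε hε hε₁).mono le_rfl (mul_le_mul_of_nonneg_left ?_ hC)⟩
  exact Real.rpow_le_rpow_of_exponent_ge hε hε₁ (neg_le_neg hρ)

theorem HasPolyEntropy.of_eqOn (h : HasPolyEntropy Ω 𝓕 ρ)
    (h𝓕 : ∀ f ∈ 𝓕', ∃ g ∈ 𝓕, EqOn f g Ω) : HasPolyEntropy Ω 𝓕' ρ := by
  obtain ⟨C, hC, hnet⟩ := h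
  exact ⟨C, hC, fun ε hε hε₁ => (hnet ε hε hε₁).of_eqOn h𝓕⟩

theorem HasPolyEntropy.union (hρ : 0 ≤ ρ) (h : HasPolyEntropy Ω 𝓕 ρ)
    (h' : HasPolyEntropy Ω 𝓕' ρ) : HasPolyEntropy Ω (𝓕 ∪ 𝓕') ρ := by
  obtain ⟨C, hC, hnet⟩ := h
  obtain ⟨C', hC', hnet'⟩ := h'
  refine ⟨C + C' + Real.log 2, by positivity, fun ε hε hε₁ => ?_⟩
  refine ((hnet ε hε hε₁).union (hnet' ε hε hε₁)).mono le_rfl ?_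
  have := mul_le_mul_of_nonneg_left (one_le_rpow_neg hε hε₁ hρ) (Real.log_nonneg one_le_two)
  linarith

theorem hasPolyEntropy_of_finite (hρ : 0 ≤ ρ) (G : Finset (X → ℝ)) (hG : G.Nonempty)
    (hmeas : ∀ g ∈ G, Measurable g) : HasPolyEntropy Ω (G : Set (X → ℝ)) ρ := by
  have hlog := Real.log_natCast_nonneg G.card
  refine ⟨Real.log G.card, hlog, fun ε hε hε₁ =>
    ⟨G, hG, hmeas, le_mul_of_one_le_right hlog (one_le_rpow_neg hε hε₁ hρ), fun f hf =>
      ⟨f, hf, fun x _ => ?_⟩⟩⟩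
  rw [sub_self, abs_zero]
  exact hε.le

theorem HasPolyEntropy.comp_finite (hρ : 0 ≤ ρ) {Y : Type*} [MeasurableSpace Y] {Ω' : Set Y}
    {𝓖 : Set (Y → ℝ)} (h : HasPolyEntropy Ω' 𝓖 ρ) {ι : Type*} [Finite ι]
    {φ : ι → X → Y} (hφ_meas : ∀ i, Measurable (φ i)) (hφ : ∀ i, MapsTo (φ i) Ω Ω') :
    HasPolyEntropy Ω {f | ∃ i, ∃ g ∈ 𝓖, f = g ∘ φ i} ρ := by
  rcases isEmpty_or_nonempty ι with hι | hι
  · exact (hasPolyEntropy_of_finite hρ {0} (Finset.singleton_nonempty 0)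
      (by simpa using measurable_zero)).of_eqOn
      fun _ ⟨i, _⟩ => isEmptyElim i
  obtain ⟨C, hC, hnet⟩ := h
  have hlog := Real.log_natCast_nonneg (Nat.card ι)
  refine ⟨Real.log (Nat.card ι) + C, by positivity, fun ε hε hε₁ => ?_⟩
  refine ((hnet ε hε hε₁).comp_finite hφ_meas hφ).mono le_rfl ?_
  have := mul_le_mul_of_nonneg_left (one_le_rpow_neg hε hε₁ hρ) hlog
  linarith

end Net

/-! ## Metric entropy of Hölder balls -/

/-- The centre of the dyadic cell of side length `2⁻ʲ` with index `c`. -/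
def gridPoint {d : ℕ} (j : ℕ) (c : Fin d → Fin (2 ^ j)) : Fin d → ℝ :=
  fun i => ((c i : ℝ) + 1 / 2) * (1 / 2) ^ j

theorem gridPoint_mem {d j : ℕ} (c : Fin d → Fin (2 ^ j)) : gridPoint j c ∈ cubeo d := by
  intro i _
  have hc : ((c i : ℕ) : ℝ) + 1 ≤ 2 ^ j := by exact_mod_cast (c i).2
  have hpos : (0 : ℝ) < (1 / 2) ^ j := by positivity
  have hinv : (2 : ℝ) ^ j * (1 / 2) ^ j = 1 := by rw [← mul_pow]; norm_num
  exact ⟨by simp only [gridPoint]; positivity, by simp only [gridPoint]; nlinarith⟩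

theorem exists_gridPoint_near {d : ℕ} (j : ℕ) {x : Fin d → ℝ} (hx : x ∈ cubeo d) :
    ∃ c : Fin d → Fin (2 ^ j), ‖x - gridPoint j c‖ ≤ (1 / 2) ^ j := by
  have hpos : (0 : ℝ) < (1 / 2) ^ j := by positivity
  have hinv : (2 : ℝ) ^ j * (1 / 2) ^ j = 1 := by rw [← mul_pow]; norm_num
  have hnonneg : ∀ i, 0 ≤ x i * 2 ^ j := fun i => mul_nonneg (hx i trivial).1.le (by positivity)
  have hlt : ∀ i, ⌊x i * 2 ^ j⌋₊ < 2 ^ j := fun i => by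
    refine (Nat.floor_lt (hnonneg i)).2 ?_
    push_cast
    exact mul_lt_of_lt_one_left (by positivity) (hx i trivial).2
  refine ⟨fun i => ⟨⌊x i * 2 ^ j⌋₊, hlt i⟩, (pi_norm_le_iff_of_nonneg hpos.le).2 fun i => ?_⟩
  have hfloor := Nat.floor_le (hnonneg i)
  have hlt_floor := Nat.lt_floor_add_one (x i * 2 ^ j)
  have hdiff : x i - (⌊x i * 2 ^ j⌋₊ + 1 / 2) * (1 / 2) ^ j =
      (x i * 2 ^ j - (⌊x i * 2 ^ j⌋₊ + 1 / 2)) * (1 / 2) ^ j := by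
    rw [sub_mul, mul_assoc, hinv, mul_one]
  simp only [Pi.sub_apply, gridPoint, Real.norm_eq_abs]
  rw [hdiff, abs_mul, abs_of_pos hpos]
  refine mul_le_of_le_one_left hpos.le (abs_le.2 ⟨?_, ?_⟩) <;> linarith

theorem abs_floor_sub_floor_le {a b B : ℝ} (h : |a - b| ≤ B) :
    |((⌊a⌋ - ⌊b⌋ : ℤ) : ℝ)| ≤ B + 1 := by
  obtain ⟨hlower, hupper⟩ := abs_le.1 h
  push_cast
  rw [abs_le]
  constructor <;>
    linarith [Int.floor_le a, Int.lt_floor_add_one a, Int.floor_le b, Int.lt_floor_add_one b]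

theorem abs_sub_le_of_floor_div_eq {a b w : ℝ} (hw : 0 < w) (h : ⌊a / w⌋ = ⌊b / w⌋) :
    |a - b| ≤ w := by
  have habs := (Int.abs_sub_lt_one_of_floor_eq_floor h).le
  rwa [← sub_div, abs_div, abs_of_pos hw, div_le_one hw] at habs

/-- Lists of directions of length at most `k`, indexing the partial derivatives of order at
most `k`. -/
abbrev ShortList (d k : ℕ) : Type := {l : List (Fin d) // l.length ≤ k}

instance (d k : ℕ) : Fintype (ShortList d k) := (List.finite_length_le (Fin d) k).fintype

/-- All partial derivatives of `f` and `g` of order at most `k` agree on the open cube up to the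
precision `M * h ^ (β - order)` that is natural at scale `h`. -/
def JetClose {d : ℕ} (k : ℕ) (β M h : ℝ) (f g : (Fin d → ℝ) → ℝ) : Prop :=
  ∀ l : List (Fin d), l.length ≤ k → ∀ x ∈ cubeo d,
    |pderivList l f x - pderivList l g x| ≤ M * h ^ (β - l.length)

/-- The partial derivatives of `f` of order at most `k` at the centres of the dyadic cells of side
length `h = 2⁻ʲ`, rounded to multiples of `h ^ (β - order)`. -/
def jetCode {d : ℕ} (k : ℕ) (β : ℝ) (j : ℕ) (f : (Fin d → ℝ) → ℝ)
    (p : (Fin d → Fin (2 ^ j)) × ShortList d k) : ℤ :=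
  ⌊pderivList p.2.1 f (gridPoint j p.1) / ((1 / 2) ^ j) ^ (β - p.2.1.length)⌋

theorem JetClose.mono {d k : ℕ} {β M M' h : ℝ} {f g : (Fin d → ℝ) → ℝ}
    (hfg : JetClose k β M h f g) (hh : 0 ≤ h) (hM : M ≤ M') : JetClose k β M' h f g :=
  fun l hl x hx => (hfg l hl x hx).trans (mul_le_mul_of_nonneg_right hM (Real.rpow_nonneg hh _))

theorem JetClose.abs_jetCode_sub_le {d k j : ℕ} {β M : ℝ} {f g : (Fin d → ℝ) → ℝ} (hM : 0 ≤ M)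
    (hfg : JetClose k β M ((1 / 2) ^ j) f g) (p : (Fin d → Fin (2 ^ (j + 1))) × ShortList d k) :
    |((jetCode k β (j + 1) f p - jetCode k β (j + 1) g p : ℤ) : ℝ)| ≤ M * 2 ^ β + 1 := by
  have hw : (0 : ℝ) < ((1 / 2) ^ (j + 1)) ^ (β - p.2.1.length) := by positivity
  refine abs_floor_sub_floor_le ?_
  rw [← sub_div, abs_div, abs_of_pos hw, div_le_iff₀ hw, mul_assoc]
  refine (hfg _ p.2.2 _ (gridPoint_mem p.1)).trans (mul_le_mul_of_nonneg_left ?_ hM)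
  have hscale : ((1 / 2 : ℝ)) ^ j = 2 * (1 / 2) ^ (j + 1) := by ring
  rw [hscale, Real.mul_rpow two_pos.le (by positivity)]
  gcongr
  · exact one_le_two
  · exact sub_le_self β (Nat.cast_nonneg _)

theorem exists_dyadic_scale {y : ℝ} (hy : 0 < y) (hy₁ : y ≤ 1) :
    ∃ j : ℕ, (1 / 2 : ℝ) ^ j ≤ y ∧ (2 : ℝ) ^ j ≤ 2 / y := by
  obtain ⟨j, hj, hj'⟩ := exists_nat_pow_near_of_lt_one hy hy₁
    (by norm_num : (0 : ℝ) < 1 / 2) (by norm_num)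
  refine ⟨j + 1, hj.le, ?_⟩
  rw [one_div, inv_pow] at hj'
  rw [pow_succ', div_eq_mul_inv]
  exact mul_le_mul_of_nonneg_left ((le_inv_comm₀ (by positivity) hy).2 hj') two_pos.le

namespace HolderBall

variable {d : ℕ} {β r : ℝ}

theorem jetClose_of_jetCode_eq (hd : 0 < d) (hβ : 0 < β) (hr : 0 ≤ r) {f g : (Fin d → ℝ) → ℝ}
    (hf : f ∈ HolderBall d β r) (hg : g ∈ HolderBall d β r) {j : ℕ}
    (h : jetCode (smoothOrder β) β j f = jetCode (smoothOrder β) β j g) :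
    JetClose (smoothOrder β) β (jetConst d (r * d + r * d) (smoothOrder β)) ((1 / 2) ^ j) f g := by
  intro l hl x hx
  have hR : 0 ≤ r * d + r * d := by positivity
  obtain ⟨c, hc⟩ := exists_gridPoint_near j hx
  have hjet := (isJet hd hβ hr hf).sub (isJet hd hβ hr hg)
  refine (hjet.abs_le_of_abs_le (convex_cubeo d) (smoothOrder_lt hβ).le hR (gridPoint_mem c)
    (by positivity) (fun l' hl' => ?_) (smoothOrder β - l.length) (by omega) hx hc).trans ?_
  · exact abs_sub_le_of_floor_div_eq (by positivity) (congrFun h (c, ⟨l', hl'⟩))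
  · exact mul_le_mul_of_nonneg_right (jetConst_mono d hR (Nat.sub_le _ _)) (by positivity)

theorem jetClose_one (hβ : 0 < β) (hr : 0 ≤ r) {f g : (Fin d → ℝ) → ℝ}
    (hf : f ∈ HolderBall d β r) (hg : g ∈ HolderBall d β r) :
    JetClose (smoothOrder β) β (2 * r) 1 f g := fun l hl x hx => by
  rw [Real.one_rpow, mul_one, two_mul]
  exact (abs_sub _ _).trans
    (add_le_add (abs_pderivList_le hβ hr hf hl hx) (abs_pderivList_le hβ hr hg hl hx))

/-- Passing from scale `2⁻ʲ` to `2⁻ʲ⁻¹` only multiplies the number of colours by a constant per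
cell; recording the jets from scratch at each scale would cost an additional logarithm. -/
theorem exists_hasColoring_jetClose (hd : 0 < d) (hβ : 0 < β) (hr : 0 ≤ r) :
    ∃ M : ℝ, 1 ≤ M ∧ ∃ N : ℕ, ∀ j : ℕ, HasColoring (HolderBall d β r)
      (JetClose (smoothOrder β) β M ((1 / 2) ^ j)) (N ^ 2 ^ (j * d)) := by
  have hJ := jetConst_nonneg d (by positivity : 0 ≤ r * d + r * d) (smoothOrder β)
  set M := 1 + 2 * r + jetConst d (r * d + r * d) (smoothOrder β)
  have hM : 1 ≤ M := by linarith
  obtain ⟨B, hB⟩ := exists_nat_ge (M * 2 ^ β + 1)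
  set N := (2 * B + 1) ^ Fintype.card (ShortList d (smoothOrder β)) with hN_def
  have hN : 0 < N := by positivity
  refine ⟨M, hM, N ^ 2, fun j => ?_⟩
  induction j with
  | zero =>
    refine ⟨Unit, inferInstance, fun _ => (), ?_, fun f hf g hg _ => ?_⟩
    · simpa using Nat.one_le_iff_ne_zero.2 (by positivity : N ^ 2 ≠ 0)
    · rw [pow_zero]
      exact (jetClose_one hβ hr hf hg).mono zero_le_one (by linarith)
  | succ j ih =>
    refine (ih.refine (B := B) (jetCode (smoothOrder β) β (j + 1))
      fun f _ g _ hfg p => ?_).mono (fun f hf g hg hfg => ?_) ?_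
    · exact_mod_cast (hfg.abs_jetCode_sub_le (by linarith) p).trans hB
    · exact (jetClose_of_jetCode_eq hd hβ hr hf hg hfg).mono (by positivity) (by linarith)
    · have hpow : 2 * 2 ^ (j * d) ≤ 2 ^ ((j + 1) * d) := by
        rw [← pow_succ']
        exact pow_le_pow_right₀ one_le_two (by nlinarith)
      have hcard : (2 * B + 1) ^ Fintype.card ((Fin d → Fin (2 ^ (j + 1))) ×
          ShortList d (smoothOrder β)) = N ^ 2 ^ ((j + 1) * d) := by
        rw [Fintype.card_prod, Fintype.card_fun, Fintype.card_fin, Fintype.card_fin, ← pow_mul,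
          hN_def, ← pow_mul, mul_comm (Fintype.card _)]
      rw [hcard, ← pow_mul N, ← pow_mul N, ← pow_add]
      exact pow_le_pow_right₀ hN (by omega)

theorem abs_sub_le_of_jetClose (hβ : 0 < β) {M h y : ℝ} (hM : 0 ≤ M) (hh : 0 ≤ h) (hhy : h ≤ y)
    {f g : (Fin d → ℝ) → ℝ} (hf : ContinuousOn f (cube d)) (hg : ContinuousOn g (cube d))
    {k : ℕ} (hfg : JetClose k β M h f g) {x : Fin d → ℝ} (hx : x ∈ cube d) :
    |f x - g x| ≤ M * y ^ β := by
  have hopen : ∀ z ∈ cubeo d, |f z - g z| ≤ M * y ^ β := fun z hz => by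
    refine (hfg [] (Nat.zero_le k) z hz).trans ?_
    rw [List.length_nil, Nat.cast_zero, sub_zero]
    gcongr
  rw [← closure_cubeo] at hx hf hg
  exact ContinuousWithinAt.closure_le (f := fun x => |f x - g x|) (g := fun _ => M * y ^ β) hx
    (((hf x hx).sub (hg x hx)).abs.mono subset_closure) continuousWithinAt_const hopen

theorem hasPolyEntropy (hd : 0 < d) (hβ : 0 < β) (hr : 0 ≤ r) :
    HasPolyEntropy (cube d) (HolderBall d β r) (d / β) := by
  classical
  obtain ⟨M, hM, N, hcolor⟩ := exists_hasColoring_jetClose hd hβ hr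
  have hM₀ : 0 < M := by linarith
  refine ⟨Real.log N * (2 ^ d * M ^ (d / β)),
    mul_nonneg (Real.log_natCast_nonneg N) (by positivity), fun ε hε hε₁ => ?_⟩
  set y := (ε / M) ^ (1 / β) with hy
  have hy₀ : 0 < y := by positivity
  have hy₁ : y ≤ 1 :=
    Real.rpow_le_one (by positivity) ((div_le_one hM₀).2 (hε₁.trans hM)) (by positivity)
  have hyβ : M * y ^ β = ε := by
    rw [hy, ← Real.rpow_mul (by positivity), one_div_mul_cancel hβ.ne', Real.rpow_one,
      mul_div_cancel₀ _ hM₀.ne']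
  have hyd : (1 / y) ^ d = M ^ (d / β) * ε ^ (-(d / β : ℝ)) := by
    rw [one_div, inv_pow, hy, ← Real.rpow_natCast, ← Real.rpow_mul (by positivity),
      one_div_mul_eq_div, Real.div_rpow hε.le hM₀.le, inv_div, Real.rpow_neg hε.le, div_eq_mul_inv]
  obtain ⟨j, hj, hj'⟩ := exists_dyadic_scale hy₀ hy₁
  refine ((hcolor j).hasNet (fun f hf g hg hfg x hx => ?_) fun f hf => ?_).mono hyβ.le ?_
  · exact abs_sub_le_of_jetClose hβ hM₀.le (by positivity) hj hf.1 hg.1 hfg hx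
  · exact ⟨(cube d).piecewise f 0, hf.1.measurable_piecewise continuousOn_const
      (measurableSet_cube d), piecewise_eqOn _ _ _⟩
  · rw [Nat.cast_pow, Real.log_pow, mul_comm, Nat.cast_pow, Nat.cast_two, pow_mul, mul_assoc,
      mul_assoc, ← hyd, ← mul_pow, mul_one_div]
    refine mul_le_mul_of_nonneg_left ?_ (Real.log_natCast_nonneg N)
    gcongr

end HolderBall

/-! ## Uniformly Hölder classes -/

theorem holderOnWith_of_dist_le {X Y : Type*} [PseudoMetricSpace X] [PseudoMetricSpace Y]
    {C b : NNReal} {f : X → Y} {s : Set X}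
    (h : ∀ x ∈ s, ∀ y ∈ s, dist (f x) (f y) ≤ C * dist x y ^ (b : ℝ)) : HolderOnWith C b f s := by
  intro x hx y hy
  rw [edist_nndist, edist_nndist, ← ENNReal.coe_rpow_of_nonneg _ b.coe_nonneg]
  exact_mod_cast h x hx y hy

theorem holderOnWith_closure {X Y : Type*} [PseudoEMetricSpace X] [PseudoEMetricSpace Y]
    {C b : NNReal} {f : X → Y} {s : Set X} (h : HolderOnWith C b f s)
    (hf : ContinuousOn f (closure s)) : HolderOnWith C b f (closure s) := by
  intro x hx y hy
  have hf_pair : ContinuousOn (fun p : X × X => edist (f p.1) (f p.2)) (closure s ×ˢ closure s) :=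
    continuous_edist.comp_continuousOn (ContinuousOn.prodMap hf hf)
  have hpow : Continuous fun p : X × X => (C : ℝ≥0∞) * edist p.1 p.2 ^ (b : ℝ) :=
    (ENNReal.continuous_const_mul (a := (C : ℝ≥0∞)) (by simp)).comp
      (ENNReal.continuous_rpow_const.comp continuous_edist)
  have hxy : (x, y) ∈ closure (s ×ˢ s) := by rw [closure_prod_eq]; exact ⟨hx, hy⟩
  exact ContinuousWithinAt.closure_le hxy
    ((hf_pair (x, y) ⟨hx, hy⟩).mono (prod_mono subset_closure subset_closure))
    hpow.continuousWithinAt fun p hp => h p.1 hp.1 p.2 hp.2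

theorem lipschitzWith_finset_sup' {ι X : Type*} [PseudoEMetricSpace X] {C : NNReal}
    {f : ι → X → ℝ} {I : Finset ι} (hI : I.Nonempty) (hf : ∀ i, LipschitzWith C (f i)) :
    LipschitzWith C fun x => I.sup' hI fun i => f i x := by
  induction hI using Finset.Nonempty.cons_induction with
  | singleton i => simpa only [Finset.sup'_singleton] using hf i
  | cons i I _ hI ih =>
    simp only [Finset.sup'_cons hI]
    simpa only [max_self] using (hf i).max ih

/-- The members of `𝓕` are Hölder continuous on `Ω` with exponent `b` and a common constant. -/
def IsUniformlyHolder {X : Type*} [PseudoEMetricSpace X] (Ω : Set X) (𝓕 : Set (X → ℝ))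
    (b : NNReal) : Prop :=
  ∃ C : NNReal, ∀ f ∈ 𝓕, HolderOnWith C b f Ω

/-- The functions that coincide on `[0,1]^m` with `g ∘ H` for some `g ∈ 𝓖` and some
`H : [0,1]^m → [0,1]^K` with components in `𝓗`. -/
def CompClass {m K : ℕ} (𝓗 : Set ((Fin m → ℝ) → ℝ)) (𝓖 : Set ((Fin K → ℝ) → ℝ)) :
    Set ((Fin m → ℝ) → ℝ) :=
  {f | ∃ (H : (Fin m → ℝ) → Fin K → ℝ) (g : (Fin K → ℝ) → ℝ), (∀ j, (fun x => H x j) ∈ 𝓗) ∧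
    (∀ x ∈ cube m, H x ∈ cube K) ∧ g ∈ 𝓖 ∧ ∀ x ∈ cube m, f x = g (H x)}

namespace IsUniformlyHolder

theorem of_eqOn {X : Type*} [PseudoEMetricSpace X] {Ω : Set X} {𝓕 𝓕' : Set (X → ℝ)} {b : NNReal}
    (h : IsUniformlyHolder Ω 𝓕 b) (h𝓕 : ∀ f ∈ 𝓕', ∃ g ∈ 𝓕, EqOn f g Ω) :
    IsUniformlyHolder Ω 𝓕' b := by
  obtain ⟨C, hC⟩ := h
  refine ⟨C, fun f hf x hx y hy => ?_⟩
  obtain ⟨g, hg, hfg⟩ := h𝓕 f hf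
  rw [hfg hx, hfg hy]
  exact hC g hg x hx y hy

theorem union {X : Type*} [PseudoEMetricSpace X] {Ω : Set X} {𝓕 𝓕' : Set (X → ℝ)} {b : NNReal}
    (h : IsUniformlyHolder Ω 𝓕 b) (h' : IsUniformlyHolder Ω 𝓕' b) :
    IsUniformlyHolder Ω (𝓕 ∪ 𝓕') b := by
  obtain ⟨C, hC⟩ := h
  obtain ⟨C', hC'⟩ := h'
  exact ⟨max C C', fun f hf => hf.elim (fun hf => (hC f hf).mono_const (le_max_left C C'))
    fun hf => (hC' f hf).mono_const (le_max_right C C')⟩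

theorem compClass {m K : ℕ} {𝓗 : Set ((Fin m → ℝ) → ℝ)} {𝓖 : Set ((Fin K → ℝ) → ℝ)}
    {a b : NNReal} (h𝓗 : IsUniformlyHolder (cube m) 𝓗 a) (h𝓖 : IsUniformlyHolder (cube K) 𝓖 b) :
    IsUniformlyHolder (cube m) (CompClass 𝓗 𝓖) (b * a) := by
  obtain ⟨C, hC⟩ := h𝓗
  obtain ⟨C', hC'⟩ := h𝓖
  refine of_eqOn (𝓕 := {f | HolderOnWith (C' * C ^ (b : ℝ)) (b * a) f (cube m)})
    ⟨_, fun f hf => hf⟩ ?_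
  rintro f ⟨H, g, hH, hH_cube, hg, hfg⟩
  have hH_holder : HolderOnWith C a H (cube m) := fun x hx y hy =>
    edist_pi_le_iff.2 fun j => hC _ (hH j) x hx y hy
  exact ⟨g ∘ H, (hC' g hg).comp hH_holder hH_cube, hfg⟩

end IsUniformlyHolder

theorem HolderBall.isUniformlyHolder {d : ℕ} (hd : 0 < d) {β r : ℝ} (hβ : 0 < β) (hr : 0 ≤ r) :
    IsUniformlyHolder (cube d) (HolderBall d β r) (min 1 β.toNNReal) := by
  refine ⟨(r * d).toNNReal, fun f hf => ?_⟩
  rw [← closure_cubeo]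
  refine holderOnWith_closure (holderOnWith_of_dist_le fun x hx z hz => ?_)
    (closure_cubeo d ▸ hf.1)
  rw [Real.coe_toNNReal _ (by positivity), NNReal.coe_min, NNReal.coe_one,
    Real.coe_toNNReal _ hβ.le, Real.dist_eq, dist_eq_norm]
  have hjet := isJet hd hβ hr hf
  have hlt := smoothOrder_lt hβ
  have hle := le_smoothOrder_add_one hβ
  rcases Nat.eq_zero_or_pos (smoothOrder β) with hk | hk
  · have htop := hjet.abs_sub_le_rpow [] hk.symm x hx z hz
    rw [hk, Nat.cast_zero, zero_add] at hle
    rw [hk, Nat.cast_zero, sub_zero] at htop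
    rwa [min_eq_right hle]
  · have hβ₁ : 1 ≤ β := le_trans (by exact_mod_cast hk) hlt.le
    rw [min_eq_left hβ₁, Real.rpow_one, mul_comm r]
    exact hjet.abs_sub_le_of_abs_le (convex_cubeo d) Subset.rfl (l := []) hk
      (fun i y hy => abs_pderivList_le hβ hr hf (by simpa using Nat.succ_le_of_lt hk) hy) hx hz

section Components

variable (m dmax : ℕ) {dstar : ℕ} {β r : ℝ}

theorem isUniformlyHolder_GH (hd : 0 < dstar) (hβ : 0 < β) (hr : 0 ≤ r) :
    IsUniformlyHolder (cube m) (GH m dstar β r) (min 1 β.toNNReal) := by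
  obtain ⟨C, hC⟩ := HolderBall.isUniformlyHolder hd hβ hr
  refine IsUniformlyHolder.of_eqOn
    (𝓕 := {f | HolderOnWith C (min 1 β.toNNReal) f (cube m)}) ⟨C, fun f hf => hf⟩ ?_
  rintro f ⟨e, g, -, hg, hfg⟩
  refine ⟨_, fun x hx y hy => (hC g hg _ (comp_mem_cube hx e) _ (comp_mem_cube hy e)).trans ?_, hfg⟩
  gcongr
  exact edist_pi_le_iff.2 fun j => edist_le_pi_edist x y (e j)

theorem isUniformlyHolder_GM {b : NNReal} (hb : b ≤ 1) :
    IsUniformlyHolder (cube m) (GM m dmax) b := by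
  refine IsUniformlyHolder.of_eqOn (𝓕 := {f | LipschitzWith 1 f}) ⟨_, fun f hf =>
    (holderOnWith_one.2 hf.lipschitzOnWith).of_le (D := 1)
      (fun x hx y hy => edist_le_one_of_mem_cube hx hy) hb⟩ ?_
  rintro f ⟨I, hI, -, hfI⟩
  exact ⟨_, lipschitzWith_finset_sup' hI LipschitzWith.eval, hfI⟩

theorem hasPolyEntropy_GH (hd : 0 < dstar) (hβ : 0 < β) (hr : 0 ≤ r) :
    HasPolyEntropy (cube m) (GH m dstar β r) (dstar / β) := by
  refine ((HolderBall.hasPolyEntropy hd hβ hr).comp_finite (by positivity)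
    (φ := fun (e : Fin dstar → Fin m) (x : Fin m → ℝ) j => x (e j)) (fun e => by fun_prop)
    fun e x hx => comp_mem_cube hx e).of_eqOn ?_
  rintro f ⟨e, g, -, hg, hfg⟩
  exact ⟨_, ⟨e, g, hg, rfl⟩, hfg⟩

theorem hasPolyEntropy_GM {ρ : ℝ} (hρ : 0 ≤ ρ) : HasPolyEntropy (cube m) (GM m dmax) ρ := by
  classical
  let maxOver : Finset (Fin m) → (Fin m → ℝ) → ℝ := fun I x =>
    if hI : I.Nonempty then I.sup' hI fun i => x i else 0
  have hmeas : ∀ I, Measurable (maxOver I) := fun I => by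
    by_cases hI : I.Nonempty
    · simp only [maxOver, hI, dite_true]
      exact (lipschitzWith_finset_sup' hI LipschitzWith.eval).continuous.measurable
    · simp only [maxOver, hI, dite_false]
      exact measurable_const
  refine (hasPolyEntropy_of_finite hρ (Finset.univ.image maxOver)
    (Finset.univ_nonempty.image _) (by simpa using hmeas)).of_eqOn ?_
  rintro f ⟨I, hI, -, hfI⟩
  refine ⟨maxOver I, by simp, fun x hx => ?_⟩
  simp only [maxOver, hI, dite_true, hfI x hx]

end Components

/-! ## Metric entropy of compositions -/

section Composition

variable {m K : ℕ} {𝓗 : Set ((Fin m → ℝ) → ℝ)} {𝓖 : Set ((Fin K → ℝ) → ℝ)}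

theorem HasNet.compClass {δ ε L L' : ℝ} {C b : NNReal} (hδ : 0 ≤ δ) (h𝓗 : HasNet (cube m) 𝓗 δ L)
    (h𝓖 : HasNet (cube K) 𝓖 ε L') (hC : ∀ g ∈ 𝓖, HolderOnWith C b g (cube K)) :
    HasNet (cube m) (CompClass 𝓗 𝓖) (C * δ ^ (b : ℝ) + ε) (K * L + L') := by
  classical
  obtain ⟨U, hU_ne, hU_meas, hU_card, hU⟩ := h𝓗
  obtain ⟨V, hV_ne, hV_meas, hV_card, hV⟩ := h𝓖
  let clip (u : Fin K → (Fin m → ℝ) → ℝ) (x : Fin m → ℝ) : Fin K → ℝ := fun j =>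
    projIcc (0 : ℝ) 1 zero_le_one (u j x)
  have hclip : ∀ u x, clip u x ∈ cube K := fun u x j _ => Subtype.mem _
  let W := (Fintype.piFinset fun _ : Fin K => U) ×ˢ V
  have hW : (W.image fun p => p.2 ∘ clip p.1).Nonempty :=
    ((Fintype.piFinset_nonempty.2 fun _ => hU_ne).product hV_ne).image _
  refine ⟨_, hW, ?_, ?_, ?_⟩
  · simp only [Finset.forall_mem_image, W, Finset.mem_product, Fintype.mem_piFinset]
    exact fun p hp => (hV_meas _ hp.2).comp (measurable_pi_lambda _ fun j =>
      (continuous_subtype_val.comp continuous_projIcc).measurable.comp (hU_meas _ (hp.1 j)))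
  · calc Real.log _ ≤ Real.log (U.card ^ K * V.card) := by
          refine Real.log_le_log (by exact_mod_cast hW.card_pos) ?_
          exact_mod_cast Finset.card_image_le.trans_eq (by simp [W])
      _ = K * Real.log U.card + Real.log V.card := by
          rw [Real.log_mul (pow_ne_zero _ (Nat.cast_ne_zero.2 hU_ne.card_ne_zero))
            (Nat.cast_ne_zero.2 hV_ne.card_ne_zero), Real.log_pow]
      _ ≤ K * L + L' := by gcongr
  · rintro f ⟨H, g, hH, hH_cube, hg, hfg⟩
    choose u hu hHu using fun j => hU _ (hH j)
    obtain ⟨v, hv, hgv⟩ := hV g hg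
    refine ⟨v ∘ clip u, Finset.mem_image.2 ⟨(u, v), Finset.mk_mem_product
      (Fintype.mem_piFinset.2 hu) hv, rfl⟩, fun x hx => ?_⟩
    have hdist : dist (H x) (clip u x) ≤ δ := (dist_pi_le_iff hδ).2 fun j => by
      have hproj : H x j = projIcc (0 : ℝ) 1 zero_le_one (H x j) :=
        (congrArg Subtype.val (projIcc_of_mem zero_le_one (hH_cube x hx j trivial))).symm
      rw [Real.dist_eq, hproj]
      exact (abs_projIcc_sub_projIcc zero_le_one).trans (hHu j x hx)
    rw [hfg x hx]
    exact (abs_sub_le _ (g (clip u x)) _).trans (add_le_add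
      ((hC g hg).dist_le_of_le (hH_cube x hx) (hclip u x) hdist) (hgv _ (hclip u x)))

theorem HasPolyEntropy.compClass {b : NNReal} {ρ : ℝ} (hb : 0 < b)
    (h𝓗 : HasPolyEntropy (cube m) 𝓗 (b * ρ)) (h𝓖 : HasPolyEntropy (cube K) 𝓖 ρ)
    (hHolder : IsUniformlyHolder (cube K) 𝓖 b) :
    HasPolyEntropy (cube m) (CompClass 𝓗 𝓖) ρ := by
  obtain ⟨C₁, hC₁, hnet₁⟩ := h𝓗
  obtain ⟨C₂, hC₂, hnet₂⟩ := h𝓖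
  obtain ⟨C, hC⟩ := hHolder
  have hb' : (b : ℝ) ≠ 0 := by exact_mod_cast hb.ne'
  set C' : ℝ := 2 * (C + 1) with hC'
  have hC'₀ : 0 < C' := by positivity
  refine ⟨K * (C₁ * C' ^ ρ) + C₂ * 2 ^ ρ, by positivity, fun ε hε hε₁ => ?_⟩
  set δ := (ε / C') ^ (1 / b : ℝ) with hδ
  have hδ₀ : 0 < δ := by positivity
  have hδ₁ : δ ≤ 1 := by
    refine Real.rpow_le_one (by positivity) ((div_le_one hC'₀).2 ?_) (by positivity)
    linarith [C.coe_nonneg]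
  have hδb : δ ^ (b : ℝ) = ε / C' := by
    rw [hδ, ← Real.rpow_mul (by positivity), one_div_mul_cancel hb', Real.rpow_one]
  have hscale : ∀ c : ℝ, 0 < c → (ε / c) ^ (-ρ) = c ^ ρ * ε ^ (-ρ) := fun c hc => by
    rw [Real.div_rpow hε.le hc.le, Real.rpow_neg hc.le, div_inv_eq_mul, mul_comm]
  refine ((hnet₁ δ hδ₀ hδ₁).compClass hδ₀.le
    (hnet₂ (ε / 2) (by linarith) (by linarith)) hC).mono ?_ ?_
  · rw [hδb]
    have hhalf : C * (ε / C') ≤ ε / 2 := by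
      rw [hC', mul_div_assoc', div_le_div_iff₀ (by positivity) two_pos]
      nlinarith
    linarith
  · rw [← mul_neg, Real.rpow_mul hδ₀.le, hδb, hscale C' hC'₀, hscale 2 two_pos]
    exact le_of_eq (by ring)

end Composition

namespace GCHOM

variable (K dmax m q : ℕ) {dstar : ℕ} {β r : ℝ}

theorem isUniformlyHolder (hd : 0 < dstar) (hβ : 0 < β) (hr : 0 ≤ r) :
    IsUniformlyHolder (cube m) (GCHOM K dmax dstar β r q m) (min 1 β.toNNReal ^ (q + 1)) := by
  have hcomponents (m : ℕ) : IsUniformlyHolder (cube m) (GH m dstar β r ∪ GM m dmax)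
      (min 1 β.toNNReal) :=
    (isUniformlyHolder_GH m hd hβ hr).union (isUniformlyHolder_GM m dmax (min_le_left _ _))
  induction q generalizing m with
  | zero =>
    rw [zero_add, pow_one]
    exact (hcomponents m).of_eqOn fun f hf => hf
  | succ q ih => exact (hcomponents m).compClass (ih K)

theorem hasPolyEntropy (hd : 0 < dstar) (hβ : 0 < β) (hr : 0 ≤ r) :
    HasPolyEntropy (cube m) (GCHOM K dmax dstar β r q m) (dstar / (β * min 1 β ^ q)) := by
  have hb : 0 < min 1 β := by positivity
  have hcomponents (m : ℕ) : HasPolyEntropy (cube m) (GH m dstar β r ∪ GM m dmax) (dstar / β) :=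
    (hasPolyEntropy_GH m hd hβ hr).union (by positivity)
      (hasPolyEntropy_GM m dmax (by positivity))
  induction q generalizing m with
  | zero =>
    rw [pow_zero, mul_one]
    exact (hcomponents m).of_eqOn fun f hf => hf
  | succ q ih =>
    refine HasPolyEntropy.compClass (b := min 1 β.toNNReal ^ (q + 1)) (by positivity) ?_
      (HasPolyEntropy.mono (ih K) ?_) (isUniformlyHolder K dmax K q hd hβ hr)
    · convert hcomponents m using 1
      rw [NNReal.coe_pow, NNReal.coe_min, NNReal.coe_one, Real.coe_toNNReal _ hβ.le]
      field_simp
    · gcongr _ / (_ * ?_)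
      exact pow_le_pow_of_le_one hb.le (min_le_left 1 β) q.le_succ

end GCHOM

/-! ## Samples and measurable selections -/

theorem measurable_snoc {α : Type*} [MeasurableSpace α] (n : ℕ) :
    Measurable fun p : (Fin n → α) × α => (Fin.snoc p.1 p.2 : Fin (n + 1) → α) := by
  refine measurable_pi_lambda _ fun i => ?_
  induction i using Fin.lastCases with
  | last => simpa only [Fin.snoc_last] using measurable_snd
  | cast i =>
    simp only [Fin.snoc_castSucc]
    exact (measurable_pi_apply i).comp measurable_fst

theorem iid_succ {α : Type*} [MeasurableSpace α] (μ : Measure α) [SFinite μ] (n : ℕ) :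
    iid μ (n + 1) = ((iid μ n).prod μ).map fun p => Fin.snoc p.1 p.2 := by
  have hmap (p : Fin n → α) : (μ.map fun a => (Fin.snoc p a : Fin (n + 1) → α)) =
      (μ.map (Prod.mk p)).map fun p => Fin.snoc p.1 p.2 :=
    (Measure.map_map (measurable_snoc n) measurable_prodMk_left).symm
  have hmeas : Measurable fun p : Fin n → α => μ.map fun a => (Fin.snoc p a : Fin (n + 1) → α) := by
    simp only [hmap]
    exact (Measure.measurable_map _ (measurable_snoc n)).comp Measurable.map_prodMk_left
  ext t ht
  rw [iid, Measure.bind_apply ht hmeas.aemeasurable, Measure.map_apply (measurable_snoc n) ht,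
    Measure.prod_apply (measurable_snoc n ht)]
  exact lintegral_congr fun p =>
    Measure.map_apply ((measurable_snoc n).comp measurable_prodMk_left) ht

theorem iid_eq_pi {α : Type*} [MeasurableSpace α] (μ : Measure α) [IsProbabilityMeasure μ]
    (n : ℕ) : iid μ n = Measure.pi fun _ => μ := by
  induction n with
  | zero => exact (Measure.pi_of_empty _ _).symm
  | succ n ih =>
    have hsplit := (measurePreserving_piFinSuccAbove (fun _ : Fin (n + 1) => μ)
      (Fin.last n)).symm.map_eq
    rw [iid_succ, ih, ← hsplit, ← Measure.prod_swap, Measure.map_map (measurable_snoc n)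
      measurable_swap]
    congr 1
    ext p : 1
    exact (Fin.insertNth_last' p.1 p.2).symm

theorem exists_measurable_argmin {Ω ι : Type*} [MeasurableSpace Ω] [Finite ι] [Nonempty ι]
    {S : ι → Ω → ℝ} (hS : ∀ i, Measurable (S i)) :
    ∃ f : Ω → ι, Measurable[_, ⊤] f ∧ ∀ ω i, S (f ω) ω ≤ S i ω := by
  classical
  obtain ⟨e, he⟩ := exists_surjective_nat ι
  have hex (ω : Ω) : ∃ k : ℕ, ∀ i, S (e k) ω ≤ S i ω := by
    obtain ⟨i₀, hi₀⟩ := Finite.exists_min fun i => S i ω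
    obtain ⟨k, rfl⟩ := he i₀
    exact ⟨k, hi₀⟩
  let _ : MeasurableSpace ι := ⊤
  refine ⟨fun ω => e (Nat.find (hex ω)), Measurable.of_discrete.comp (measurable_find hex ?_),
    fun ω => Nat.find_spec (hex ω)⟩
  intro k
  rw [ofPred_forall]
  exact MeasurableSet.iInter fun i => measurableSet_le (hS _) (hS _)

theorem measurable_selection {Ω Ω' ι : Type*} [MeasurableSpace Ω] [MeasurableSpace Ω'] [Countable ι]
    {s : Ω → ι} (hs : Measurable[_, ⊤] s) {φ : ι → Ω' → ℝ} (hφ : ∀ i, Measurable (φ i))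
    {u : Ω → Ω'} (hu : Measurable u) : Measurable fun ω => φ (s ω) (u ω) := by
  let _ : MeasurableSpace ι := ⊤
  have hpair : Measurable fun p : ι × Ω' => φ p.1 p.2 := measurable_from_prod_countable_right hφ
  exact hpair.comp (hs.prodMk hu)

theorem integrable_selection {Ω ι : Type*} [MeasurableSpace Ω] {μ : Measure Ω} [Finite ι]
    {s : Ω → ι} (hs : Measurable[_, ⊤] s) {φ : ι → Ω → ℝ} (hφ : ∀ i, Measurable (φ i))
    (hint : ∀ i, Integrable (φ i) μ) : Integrable (fun ω => φ (s ω) ω) μ := by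
  cases nonempty_fintype ι
  refine (integrable_finsetSum Finset.univ fun i _ => (hint i).abs).mono'
    (measurable_selection hs hφ measurable_id).aestronglyMeasurable (ae_of_all _ fun ω => ?_)
  exact Finset.single_le_sum (f := fun i => |φ i ω|) (fun _ _ => abs_nonneg _) (Finset.mem_univ _)

/-! ## Empirical selection under a Bernstein condition -/

theorem integral_selection_le_log_card {Ω ι : Type*} [MeasurableSpace Ω] {μ : Measure Ω}
    [IsProbabilityMeasure μ] [Fintype ι] {V : ι → Ω → ℝ} (hV : ∀ i, Measurable (V i))
    (hint : ∀ i, Integrable (V i) μ) (hexp : ∀ i, Integrable (fun ω => Real.exp (V i ω)) μ)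
    (hle : ∀ i, ∫ ω, Real.exp (V i ω) ∂μ ≤ 1) {s : Ω → ι} (hs : Measurable[_, ⊤] s) :
    ∫ ω, V (s ω) ω ∂μ ≤ Real.log (Fintype.card ι) := by
  have hint_s := integrable_selection hs hV hint
  have hexp_s := integrable_selection hs (fun i => (hV i).exp) hexp
  refine (Real.le_log_iff_exp_le ?_).2 ?_
  · have := (μ.nonempty_of_neZero).map s
    exact_mod_cast Fintype.card_pos
  calc Real.exp (∫ ω, V (s ω) ω ∂μ) ≤ ∫ ω, Real.exp (V (s ω) ω) ∂μ :=
        convexOn_exp.map_integral_le Real.continuous_exp.continuousOn isClosed_univ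
          (by simp) hint_s hexp_s
    _ ≤ ∫ ω, ∑ i, Real.exp (V i ω) ∂μ :=
        integral_mono hexp_s (integrable_finsetSum _ fun i _ => hexp i) fun ω =>
          Finset.single_le_sum (f := fun i => Real.exp (V i ω))
            (fun i _ => (Real.exp_pos _).le) (Finset.mem_univ (s ω))
    _ = ∑ i, ∫ ω, Real.exp (V i ω) ∂μ := integral_finsetSum _ fun i _ => hexp i
    _ ≤ ∑ _i : ι, (1 : ℝ) := Finset.sum_le_sum fun i _ => hle i
    _ = Fintype.card ι := by simp

theorem integrable_of_abs_le {Ω : Type*} [MeasurableSpace Ω] {μ : Measure Ω} [IsFiniteMeasure μ]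
    {f : Ω → ℝ} (hf : Measurable f) {C : ℝ} (hC : ∀ ω, |f ω| ≤ C) : Integrable f μ :=
  Integrable.of_bound hf.aestronglyMeasurable C (ae_of_all _ hC)

theorem integrable_exp_of_abs_le {Ω : Type*} [MeasurableSpace Ω] {μ : Measure Ω}
    [IsFiniteMeasure μ] {f : Ω → ℝ} (hf : Measurable f) {C : ℝ} (hC : ∀ ω, |f ω| ≤ C) :
    Integrable (fun ω => Real.exp (f ω)) μ :=
  integrable_of_abs_le (C := Real.exp C) hf.exp fun ω => by
    rw [Real.abs_exp]
    exact Real.exp_le_exp.2 (abs_le.1 (hC ω)).2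

section ProductSample

variable {Ω : Type*} [MeasurableSpace Ω] {μ : Measure Ω} [IsProbabilityMeasure μ] {n : ℕ}

theorem integrable_sum_comp_eval {f : Ω → ℝ} (hf : Integrable f μ) :
    Integrable (fun ω : Fin n → Ω => ∑ k, f (ω k)) (Measure.pi fun _ => μ) :=
  integrable_finsetSum _ fun _ _ => integrable_comp_eval hf

theorem integral_sum_comp_eval {f : Ω → ℝ} (hf : Integrable f μ) :
    ∫ ω : Fin n → Ω, ∑ k, f (ω k) ∂(Measure.pi fun _ => μ) = n * ∫ x, f x ∂μ := by
  rw [integral_finsetSum _ fun k _ => integrable_comp_eval hf]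
  simp [integral_comp_eval (μ := fun _ : Fin n => μ) hf.aestronglyMeasurable]

theorem integrable_sum_selection {ι : Type*} [Finite ι] {X : ι → Ω → ℝ}
    (hX : ∀ i, Measurable (X i)) (hint : ∀ i, Integrable (X i) μ) {s : (Fin n → Ω) → ι}
    (hs : Measurable[_, ⊤] s) :
    Integrable (fun ω => ∑ k, X (s ω) (ω k)) (Measure.pi fun _ => μ) :=
  integrable_selection hs (φ := fun i ω => ∑ k, X i (ω k))
    (fun i => Finset.measurable_fun_sum _ fun k _ => (hX i).comp (measurable_pi_apply k))
    fun i => integrable_sum_comp_eval (hint i)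

theorem integral_sum_selection_le_log_card {ι : Type*} [Fintype ι] {X : ι → Ω → ℝ}
    (hX : ∀ i, Measurable (X i)) (hint : ∀ i, Integrable (X i) μ)
    (hexp : ∀ i, Integrable (fun x => Real.exp (X i x)) μ)
    (hle : ∀ i, ∫ x, Real.exp (X i x) ∂μ ≤ 1) {s : (Fin n → Ω) → ι} (hs : Measurable[_, ⊤] s) :
    ∫ ω, ∑ k, X (s ω) (ω k) ∂(Measure.pi fun _ => μ) ≤ Real.log (Fintype.card ι) := by
  refine integral_selection_le_log_card (V := fun i (ω : Fin n → Ω) => ∑ k, X i (ω k))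
    (fun i => Finset.measurable_fun_sum _ fun k _ => (hX i).comp (measurable_pi_apply k))
    (fun i => integrable_sum_comp_eval (hint i)) (fun i => ?_) (fun i => ?_) hs
  · simp only [Real.exp_sum]
    exact Integrable.fintype_prod (f := fun _ x => Real.exp (X i x)) fun _ => hexp i
  · simp only [Real.exp_sum]
    rw [integral_fintype_prod_eq_pow fun x => Real.exp (X i x)]
    exact pow_le_one₀ (integral_nonneg fun _ => (Real.exp_pos _).le) (hle i)

end ProductSample

theorem integral_exp_bernstein_le_one {Ω : Type*} [MeasurableSpace Ω] {μ : Measure Ω}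
    [IsProbabilityMeasure μ] {Z : Ω → ℝ} (hZ : Measurable Z) (hZ₁ : ∀ ω, |Z ω| ≤ 1) {lam a : ℝ}
    (hlam : 0 ≤ lam) (hlam₁ : lam ≤ 1)
    (hvar : lam * ∫ ω, Z ω ^ 2 ∂μ ≤ (∫ ω, Z ω ∂μ + a) / 2) :
    ∫ ω, Real.exp (lam * ((∫ x, Z x ∂μ - a) / 2 - Z ω)) ∂μ ≤ 1 := by
  set m := ∫ x, Z x ∂μ
  have hZ_int : Integrable Z μ := integrable_of_abs_le hZ hZ₁
  have hZsq_int : Integrable (fun ω => Z ω ^ 2) μ :=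
    integrable_of_abs_le (hZ.pow_const 2) fun ω => by
      rw [abs_pow]
      exact pow_le_one₀ (abs_nonneg _) (hZ₁ ω)
  have hpoint (ω : Ω) : Real.exp (-(lam * Z ω)) ≤ 1 - lam * Z ω + lam ^ 2 * Z ω ^ 2 := by
    have hu : |-(lam * Z ω)| ≤ 1 := by
      rw [abs_neg, abs_mul, abs_of_nonneg hlam]
      exact mul_le_one₀ hlam₁ (abs_nonneg _) (hZ₁ ω)
    linarith [(abs_le.1 (Real.abs_exp_sub_one_sub_id_le hu)).2]
  have hsub_int : Integrable (fun ω => 1 - lam * Z ω) μ :=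
    (integrable_const _).sub (hZ_int.const_mul _)
  have hmgf : ∫ ω, Real.exp (-(lam * Z ω)) ∂μ ≤ Real.exp (-(lam * ((m - a) / 2))) :=
    calc ∫ ω, Real.exp (-(lam * Z ω)) ∂μ ≤ ∫ ω, (1 - lam * Z ω + lam ^ 2 * Z ω ^ 2) ∂μ :=
          integral_mono_of_nonneg (ae_of_all _ fun _ => (Real.exp_pos _).le)
            (hsub_int.add (hZsq_int.const_mul _)) (ae_of_all _ hpoint)
      _ = 1 - lam * m + lam * (lam * ∫ ω, Z ω ^ 2 ∂μ) := by
          rw [integral_add hsub_int (hZsq_int.const_mul _),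
            integral_sub (integrable_const _) (hZ_int.const_mul _), integral_const_mul,
            integral_const_mul, integral_const, probReal_univ]
          simp only [smul_eq_mul]
          ring
      _ ≤ 1 - lam * m + lam * ((m + a) / 2) := by gcongr
      _ = -(lam * ((m - a) / 2)) + 1 := by ring
      _ ≤ Real.exp (-(lam * ((m - a) / 2))) := Real.add_one_le_exp _
  simp only [mul_sub lam, sub_eq_add_neg _ (lam * _), Real.exp_add]
  rw [integral_const_mul]
  calc _ ≤ Real.exp (lam * ((m - a) / 2)) * Real.exp (-(lam * ((m - a) / 2))) := by gcongr
    _ = 1 := by rw [← Real.exp_add, add_neg_cancel, Real.exp_zero]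

theorem integral_selection_le {Ω ι : Type*} [MeasurableSpace Ω] {μ : Measure Ω}
    [IsProbabilityMeasure μ] [Fintype ι] {n : ℕ} (hn : 0 < n) {Z : ι → Ω → ℝ}
    (hZ : ∀ i, Measurable (Z i)) (hZ₁ : ∀ i ω, |Z i ω| ≤ 1) {lam a : ℝ} (hlam : 0 < lam)
    (hlam₁ : lam ≤ 1) (hvar : ∀ i, lam * ∫ ω, Z i ω ^ 2 ∂μ ≤ (∫ ω, Z i ω ∂μ + a) / 2)
    {s : (Fin n → Ω) → ι} (hs : Measurable[_, ⊤] s) {i₀ : ι}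
    (hmin : ∀ ω, ∑ k, Z (s ω) (ω k) ≤ ∑ k, Z i₀ (ω k)) :
    ∫ ω, (∫ x, Z (s ω) x ∂μ) ∂(Measure.pi fun _ : Fin n => μ) ≤
      a + 2 * Real.log (Fintype.card ι) / (lam * n) + 2 * ∫ x, Z i₀ x ∂μ := by
  set ν := Measure.pi fun _ : Fin n => μ
  set m : ι → ℝ := fun i => ∫ x, Z i x ∂μ
  set X : ι → Ω → ℝ := fun i x => lam * ((m i - a) / 2 - Z i x)
  have hn' : (0 : ℝ) < n := by exact_mod_cast hn
  have hZ_int (i : ι) : Integrable (Z i) μ := integrable_of_abs_le (hZ i) (hZ₁ i)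
  have hX (i : ι) : Measurable (X i) := ((hZ i).const_sub _).const_mul _
  have hX_le (i : ι) (x : Ω) : |X i x| ≤ lam * (|(m i - a) / 2| + 1) := by
    rw [abs_mul, abs_of_pos hlam]
    gcongr
    exact (abs_sub _ _).trans (by gcongr; exact hZ₁ i x)
  have hX_int (i : ι) : Integrable (X i) μ := integrable_of_abs_le (hX i) (hX_le i)
  have hm_int : Integrable (fun ω => m (s ω)) ν :=
    integrable_selection hs (fun i => measurable_const) fun i => integrable_const (m i)
  have hexcess_int : Integrable (fun ω => n * ((m (s ω) - a) / 2)) ν :=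
    ((hm_int.sub (integrable_const a)).div_const 2).const_mul _
  have hsum_int : Integrable (fun ω => ∑ k, Z i₀ (ω k)) ν := integrable_sum_comp_eval (hZ_int i₀)
  have hlog : lam * (n * ((∫ ω, m (s ω) ∂ν - a) / 2) - n * m i₀) ≤ Real.log (Fintype.card ι) :=
    calc _ = ∫ ω, lam * (n * ((m (s ω) - a) / 2) - ∑ k, Z i₀ (ω k)) ∂ν := by
          rw [integral_const_mul, integral_sub hexcess_int hsum_int, integral_const_mul,
            integral_div, integral_sub hm_int (integrable_const a), integral_const,
            probReal_univ, one_smul, integral_sum_comp_eval (hZ_int i₀)]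
      _ ≤ ∫ ω, ∑ k, X (s ω) (ω k) ∂ν := by
          refine integral_mono ((hexcess_int.sub hsum_int).const_mul lam)
            (integrable_sum_selection hX hX_int hs) fun ω => ?_
          simp only [X, ← Finset.mul_sum, Finset.sum_sub_distrib, Finset.sum_const,
            Finset.card_univ, Fintype.card_fin, nsmul_eq_mul]
          exact mul_le_mul_of_nonneg_left (sub_le_sub_left (hmin ω) _) hlam.le
      _ ≤ Real.log (Fintype.card ι) := integral_sum_selection_le_log_card hX hX_int
          (fun i => integrable_exp_of_abs_le (hX i) (hX_le i))
          (fun i => integral_exp_bernstein_le_one (hZ i) (hZ₁ i) hlam.le hlam₁ (hvar i)) hs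
  rw [← le_div_iff₀' hlam] at hlog
  rw [mul_div_assoc, ← div_div, ← sub_le_iff_le_add, ← sub_le_iff_le_add', ← div_le_iff₀' two_pos,
    le_div_iff₀ hn']
  linarith

/-! ## Excess risk and margin -/

theorem measurable_ofReal_smul_dirac {X Y : Type*} [MeasurableSpace X] [MeasurableSpace Y]
    {w : X → ℝ} (hw : Measurable w) {g : X → Y} (hg : Measurable g) :
    Measurable fun x => ENNReal.ofReal (w x) • Measure.dirac (g x) :=
  Measure.measurable_of_measurable_coe _ fun _ hs =>
    hw.ennreal_ofReal.mul ((Measure.measurable_coe hs).comp (Measure.measurable_dirac.comp hg))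

theorem measurable_sgn : Measurable sgn :=
  Measurable.ite measurableSet_Ici measurable_const measurable_const

theorem sgn_eq_or (t : ℝ) : sgn t = 1 ∨ sgn t = -1 := by
  unfold sgn
  split_ifs <;> simp

theorem sgn_mul_self (t : ℝ) : sgn t * t = |t| := by
  unfold sgn
  split_ifs with h
  · rw [one_mul, abs_of_nonneg h]
  · rw [neg_one_mul, abs_of_neg (not_le.1 h)]

theorem abs_le_abs_sub_of_sgn_ne {a b : ℝ} (h : sgn a ≠ sgn b) : |b| ≤ |a - b| := by
  unfold sgn at h
  split_ifs at h with ha hb hb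
  · exact absurd rfl h
  · rw [abs_of_neg (not_le.1 hb), abs_of_pos] <;> linarith
  · rw [abs_of_nonneg hb, abs_of_neg] <;> linarith
  · exact absurd rfl h

theorem mul_measureReal_le_setIntegral_add {X : Type*} [MeasurableSpace X] {μ : Measure X}
    [IsFiniteMeasure μ] {f : X → ℝ} (hf : Integrable f μ) (hf₀ : ∀ x, 0 ≤ f x) {E : Set X}
    (hE : MeasurableSet E) {t : ℝ} (ht : 0 ≤ t) :
    t * μ.real E ≤ ∫ x in E, f x ∂μ + t * μ.real {x | f x ≤ t} := by
  have hmarkov : t * μ.real (E ∩ {x | t ≤ f x}) ≤ ∫ x in E, f x ∂μ := by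
    rw [inter_comm, ← measureReal_restrict_apply' hE]
    exact mul_meas_ge_le_integral_of_nonneg (ae_of_all _ hf₀) hf.integrableOn t
  have hcover : μ.real E ≤ μ.real (E ∩ {x | t ≤ f x}) + μ.real {x | f x ≤ t} :=
    (measureReal_mono fun x hx => (le_total t (f x)).imp (⟨hx, ·⟩) id).trans
      (measureReal_union_le _ _)
  nlinarith

/-- The 0-1 loss of the classifier `sgn ∘ g`. -/
def loss01 {d : ℕ} (g : (Fin d → ℝ) → ℝ) : (Fin d → ℝ) × ℝ → ℝ :=
  {p | sgn (g p.1) ≠ p.2}.indicator 1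

section ZeroOneLoss

variable {d : ℕ} {g : (Fin d → ℝ) → ℝ}

theorem measurableSet_sgn_ne (hg : Measurable g) :
    MeasurableSet {p : (Fin d → ℝ) × ℝ | sgn (g p.1) ≠ p.2} :=
  (measurableSet_eq_fun (measurable_sgn.comp (hg.comp measurable_fst)) measurable_snd).compl

theorem measurable_loss01 (hg : Measurable g) : Measurable (loss01 g) :=
  measurable_one.indicator (measurableSet_sgn_ne hg)

theorem loss01_mem_Icc (p : (Fin d → ℝ) × ℝ) : loss01 g p ∈ Icc (0 : ℝ) 1 :=
  ⟨indicator_nonneg (fun _ _ => zero_le_one) p, indicator_le_self' (fun _ _ => zero_le_one) p⟩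

theorem risk01_eq_integral (P : Measure ((Fin d → ℝ) × ℝ)) (hg : Measurable g) :
    risk01 P g = ∫ p, loss01 g p ∂P :=
  (integral_indicator_one (measurableSet_sgn_ne hg)).symm

end ZeroOneLoss

namespace DataDist

open ProbabilityTheory

variable {d : ℕ} (D : DataDist d)

instance isProbabilityMeasure_Q : IsProbabilityMeasure D.Q := D.Q_prob

theorem ae_mem_cube : ∀ᵐ x ∂D.Q, x ∈ cube d :=
  (prob_compl_eq_zero_iff (measurableSet_cube d)).2 D.Q_cube

/-- The Markov kernel `x ↦ η(x) δ_{(x,1)} + (1 - η(x)) δ_{(x,-1)}`, for which `D.P` is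
definitionally `D.labelKernel ∘ₘ D.Q`. -/
def labelKernel : Kernel (Fin d → ℝ) ((Fin d → ℝ) × ℝ) where
  toFun x := ENNReal.ofReal (D.η x) • Measure.dirac (x, (1 : ℝ)) +
    ENNReal.ofReal (1 - D.η x) • Measure.dirac (x, (-1 : ℝ))
  measurable' := (measurable_ofReal_smul_dirac D.η_meas measurable_prodMk_right).fun_add
    (measurable_ofReal_smul_dirac (D.η_meas.const_sub 1) measurable_prodMk_right)

instance isMarkovKernel_labelKernel : IsMarkovKernel D.labelKernel where
  isProbabilityMeasure x := ⟨by
    have hη := D.η_mem x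
    simp [labelKernel, ← ENNReal.ofReal_add hη.1 (sub_nonneg.2 hη.2)]⟩

instance isProbabilityMeasure_P : IsProbabilityMeasure D.P :=
  inferInstanceAs (IsProbabilityMeasure (D.Q.bind D.labelKernel))

theorem integral_labelKernel (φ : (Fin d → ℝ) × ℝ → ℝ) (x : Fin d → ℝ) :
    ∫ p, φ p ∂D.labelKernel x = D.η x * φ (x, 1) + (1 - D.η x) * φ (x, -1) := by
  have hint (w y : ℝ) : Integrable φ (ENNReal.ofReal w • Measure.dirac (x, y)) :=
    (integrable_dirac (by finiteness)).smul_measure ENNReal.ofReal_ne_top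
  have hη := D.η_mem x
  rw [labelKernel, Kernel.coe_mk, integral_add_measure (hint _ _) (hint _ _)]
  simp only [integral_smul_measure, integral_dirac, smul_eq_mul, ENNReal.toReal_ofReal hη.1,
    ENNReal.toReal_ofReal (sub_nonneg.2 hη.2)]

theorem integral_P {φ : (Fin d → ℝ) × ℝ → ℝ} (hφ : Integrable φ D.P) :
    ∫ p, φ p ∂D.P = ∫ x, (D.η x * φ (x, 1) + (1 - D.η x) * φ (x, -1)) ∂D.Q := by
  have hP : D.P = (D.labelKernel ∘ₖ Kernel.const Unit D.Q) () :=
    Measure.comp_eq_comp_const_apply (μ := D.Q) (κ := D.labelKernel)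
  rw [hP] at hφ ⊢
  simp only [Kernel.integral_comp hφ, integral_labelKernel,
    Kernel.const_apply]

/-- The regression function `2η - 1`, whose sign is the Bayes classifier. -/
def regr (x : Fin d → ℝ) : ℝ := 2 * D.η x - 1

theorem measurable_regr : Measurable D.regr := (D.η_meas.const_mul 2).sub_const 1

theorem abs_regr_le_one (x : Fin d → ℝ) : |D.regr x| ≤ 1 := by
  have := D.η_mem x
  rw [regr, abs_le]
  constructor <;> linarith [this.1, this.2]

theorem integrable_abs_regr : Integrable (fun x => |D.regr x|) D.Q :=
  (integrable_of_abs_le D.measurable_regr D.abs_regr_le_one).abs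

/-- The set on which the classifier `sgn ∘ g` differs from the Bayes classifier. -/
def disagreeSet (g : (Fin d → ℝ) → ℝ) : Set (Fin d → ℝ) := {x | sgn (g x) ≠ sgn (D.regr x)}

/-- The 0-1 loss of `sgn ∘ g` in excess of that of the Bayes classifier. -/
def excessLoss (g : (Fin d → ℝ) → ℝ) (p : (Fin d → ℝ) × ℝ) : ℝ := loss01 g p - loss01 D.regr p

theorem abs_excessLoss_le_one (g : (Fin d → ℝ) → ℝ) (p : (Fin d → ℝ) × ℝ) :
    |D.excessLoss g p| ≤ 1 :=
  (abs_sub_le_of_le_of_le (loss01_mem_Icc p).1 (loss01_mem_Icc p).2 (loss01_mem_Icc p).1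
    (loss01_mem_Icc p).2).trans_eq (sub_zero 1)

variable {g : (Fin d → ℝ) → ℝ}

theorem measurableSet_disagreeSet (hg : Measurable g) : MeasurableSet (D.disagreeSet g) :=
  (measurableSet_eq_fun (measurable_sgn.comp hg) (measurable_sgn.comp D.measurable_regr)).compl

theorem measurable_excessLoss (hg : Measurable g) : Measurable (D.excessLoss g) :=
  (measurable_loss01 hg).sub (measurable_loss01 D.measurable_regr)

theorem integral_excessLoss (hg : Measurable g) :
    ∫ p, D.excessLoss g p ∂D.P = ∫ x in D.disagreeSet g, |D.regr x| ∂D.Q := by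
  rw [D.integral_P (integrable_of_abs_le (D.measurable_excessLoss hg) (D.abs_excessLoss_le_one g)),
    ← integral_indicator (D.measurableSet_disagreeSet hg)]
  congr 1 with x
  simp only [← sgn_mul_self]
  have hη : D.η x = (D.regr x + 1) / 2 := by
    rw [regr]
    ring
  have h1 : (1 : ℝ) ≠ -1 := by norm_num
  rcases sgn_eq_or (D.regr x) with hs | hs <;> rcases sgn_eq_or (g x) with hs' | hs' <;>
    simp [excessLoss, loss01, disagreeSet, hs, hs', h1, h1.symm, hη] <;> ring

theorem integral_excessLoss_sq (hg : Measurable g) :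
    ∫ p, D.excessLoss g p ^ 2 ∂D.P = D.Q.real (D.disagreeSet g) := by
  have hint : Integrable (fun p => D.excessLoss g p ^ 2) D.P :=
    integrable_of_abs_le ((D.measurable_excessLoss hg).pow_const 2) (C := 1) fun p => by
      rw [abs_pow]
      exact pow_le_one₀ (abs_nonneg _) (D.abs_excessLoss_le_one g p)
  rw [D.integral_P hint, ← integral_indicator_one (D.measurableSet_disagreeSet hg)]
  congr 1 with x
  have h1 : (1 : ℝ) ≠ -1 := by norm_num
  rcases sgn_eq_or (D.regr x) with hs | hs <;> rcases sgn_eq_or (g x) with hs' | hs' <;>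
    simp [excessLoss, loss01, disagreeSet, hs, hs', h1, h1.symm]

theorem risk01_sub_risk01_regr (hg : Measurable g) :
    risk01 D.P g - risk01 D.P D.regr = ∫ p, D.excessLoss g p ∂D.P := by
  have hint {f : (Fin d → ℝ) → ℝ} (hf : Measurable f) : Integrable (loss01 f) D.P :=
    integrable_of_abs_le (measurable_loss01 hf) fun p =>
      (abs_of_nonneg (loss01_mem_Icc p).1).trans_le (loss01_mem_Icc p).2
  rw [risk01_eq_integral _ hg, risk01_eq_integral _ D.measurable_regr,
    ← integral_sub (hint hg) (hint D.measurable_regr)]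
  rfl

theorem bayes01_eq : bayes01 D.P = risk01 D.P D.regr := by
  have hmin (f : {f : (Fin d → ℝ) → ℝ // Measurable f}) : risk01 D.P D.regr ≤ risk01 D.P f.1 := by
    rw [← sub_nonneg, D.risk01_sub_risk01_regr f.2, D.integral_excessLoss f.2]
    exact integral_nonneg fun _ => abs_nonneg _
  have : Nonempty {f : (Fin d → ℝ) → ℝ // Measurable f} := ⟨⟨D.regr, D.measurable_regr⟩⟩
  exact le_antisymm (ciInf_le ⟨_, forall_mem_range.2 hmin⟩ ⟨D.regr, D.measurable_regr⟩)
    (le_ciInf hmin)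

theorem excess01_eq_integral (hg : Measurable g) :
    excess01 D.P g = ∫ p, D.excessLoss g p ∂D.P := by
  rw [excess01, bayes01_eq, D.risk01_sub_risk01_regr hg]

/-- The margin condition in the form of a Bernstein condition for the excess loss. -/
theorem mul_integral_excessLoss_sq_le (hg : Measurable g) {t : ℝ} (ht : 0 ≤ t) :
    t * ∫ p, D.excessLoss g p ^ 2 ∂D.P ≤
      ∫ p, D.excessLoss g p ∂D.P + t * D.Q.real {x | |D.regr x| ≤ t} := by
  rw [D.integral_excessLoss_sq hg, D.integral_excessLoss hg]
  exact mul_measureReal_le_setIntegral_add D.integrable_abs_regr (fun _ => abs_nonneg _)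
    (D.measurableSet_disagreeSet hg) ht

theorem integral_excessLoss_plugin_le (hg : Measurable g) {t : ℝ} (ht : 0 ≤ t)
    (happrox : ∀ᵐ x ∂D.Q, |D.η x - g x| ≤ t / 2) :
    ∫ p, D.excessLoss (fun x => 2 * g x - 1) p ∂D.P ≤ t * D.Q.real {x | |D.regr x| ≤ t} := by
  set E := D.disagreeSet fun x => 2 * g x - 1
  have hg' : Measurable fun x => 2 * g x - 1 := (hg.const_mul 2).sub_const 1
  have hE : MeasurableSet E := D.measurableSet_disagreeSet hg'
  have hmargin : ∀ᵐ x ∂D.Q, x ∈ E → |D.regr x| ≤ t := by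
    filter_upwards [happrox] with x hx hxE
    calc |D.regr x| ≤ |(2 * g x - 1) - D.regr x| := abs_le_abs_sub_of_sgn_ne hxE
      _ = 2 * |D.η x - g x| := by
          rw [abs_sub_comm, ← abs_two (α := ℝ), ← abs_mul, regr, abs_two]
          congr 1
          ring
      _ ≤ t := by linarith
  calc ∫ p, D.excessLoss (fun x => 2 * g x - 1) p ∂D.P = ∫ x in E, |D.regr x| ∂D.Q :=
        D.integral_excessLoss hg'
    _ ≤ ∫ _x in E, t ∂D.Q := setIntegral_mono_on_ae D.integrable_abs_regr.integrableOn
        (integrable_const t).integrableOn hE hmargin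
    _ = t * D.Q.real E := by rw [setIntegral_const, smul_eq_mul, mul_comm]
    _ ≤ t * D.Q.real {x | |D.regr x| ≤ t} :=
        mul_le_mul_of_nonneg_left
          (ENNReal.toReal_mono (measure_ne_top _ _) (measure_mono_ae hmargin)) ht

end DataDist

theorem exists_estimator_le {d n : ℕ} (hn : 0 < n) {G : Finset ((Fin d → ℝ) → ℝ)}
    (hne : G.Nonempty) (hG : ∀ g ∈ G, Measurable g) :
    ∃ A : Estimator d n, A.Meas ∧ ∀ (D : DataDist d) (t : ℝ), 0 < t → t ≤ 1 →
      (∃ g ∈ G, ∀ᵐ x ∂D.Q, |D.η x - g x| ≤ t / 2) →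
      expectedExcess01 D.P A ≤ 3 * (t * D.Q.real {x | |D.regr x| ≤ t}) +
        4 * (Real.log G.card / (t * n)) := by
  have := hne.to_subtype
  set h : G → (Fin d → ℝ) → ℝ := fun g x => 2 * g.1 x - 1
  have hh (g : G) : Measurable (h g) := ((hG g g.2).const_mul 2).sub_const 1
  obtain ⟨s, hs, hmin⟩ := exists_measurable_argmin
    (S := fun g (ω : Fin n → (Fin d → ℝ) × ℝ) => ∑ k, loss01 (h g) (ω k)) fun g =>
      Finset.measurable_fun_sum _ fun k _ => (measurable_loss01 (hh g)).comp (measurable_pi_apply k)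
  have hs_fst : Measurable[_, ⊤] fun p : (Fin n → (Fin d → ℝ) × ℝ) × (Fin d → ℝ) => s p.1 :=
    @Measurable.comp _ _ _ _ _ ⊤ _ _ hs measurable_fst
  refine ⟨fun ω => h (s ω), measurable_selection hs_fst hh measurable_snd, ?_⟩
  rintro D t ht ht₁ ⟨g, hgG, hg⟩
  have hloss := integral_selection_le (μ := D.P) hn (Z := fun g => D.excessLoss (h g))
    (fun g => D.measurable_excessLoss (hh g)) (fun g => D.abs_excessLoss_le_one (h g))
    (half_pos ht) (by linarith) (a := t * D.Q.real {x | |D.regr x| ≤ t})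
    (fun g => by linarith [D.mul_integral_excessLoss_sq_le (hh g) ht.le]) hs (i₀ := ⟨g, hgG⟩)
    fun ω => by
      simp only [DataDist.excessLoss, Finset.sum_sub_distrib]
      exact sub_le_sub_right (hmin ω _) _
  have happrox : ∫ p, D.excessLoss (h ⟨g, hgG⟩) p ∂D.P ≤ t * D.Q.real {x | |D.regr x| ≤ t} :=
    D.integral_excessLoss_plugin_le (hG g hgG) ht.le hg
  calc expectedExcess01 D.P (fun ω => h (s ω))
      = ∫ ω, (∫ p, D.excessLoss (h (s ω)) p ∂D.P) ∂(Measure.pi fun _ : Fin n => D.P) := by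
        simp only [expectedExcess01, iid_eq_pi, D.excess01_eq_integral (hh _)]
    _ ≤ _ := hloss
    _ ≤ 3 * (t * D.Q.real {x | |D.regr x| ≤ t}) +
        4 * (Real.log G.card / (t * n)) := by
      have : 2 * Real.log G.card / (t / 2 * n) = 4 * (Real.log G.card / (t * n)) := by
        field_simp
        ring
      rw [Fintype.card_coe, this]
      linarith

/-! ## Rates -/

/-- The exponent of the rate of classification for classes of metric entropy `ε ^ (-ρ)` under
noise exponent `s`. -/
def entropyRate (ρ : ℝ) (s : ℝ≥0∞) : ℝ :=
  if s = ∞ then 1 else (s.toReal + 1) / (ρ + s.toReal + 2)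

theorem rateExp_eq_entropyRate {dstar : ℕ} {e : ℝ} (he : 0 < e) (s : ℝ≥0∞) :
    rateExp dstar e s = entropyRate (dstar / e) s := by
  unfold rateExp entropyRate
  split_ifs
  · rfl
  · field_simp
    ring

theorem rpowE_ofReal_lt_top {t : ℝ} (ht : t < 1) (s : ℝ≥0∞) : rpowE (ENNReal.ofReal t) s < ∞ := by
  rw [rpowE, if_pos (ENNReal.ofReal_lt_one.2 ht)]
  split_ifs
  · exact ENNReal.zero_lt_top
  · exact ENNReal.rpow_lt_top_of_nonneg ENNReal.toReal_nonneg ENNReal.ofReal_ne_top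

theorem rpowE_ofReal_toReal {t : ℝ} (ht : 0 ≤ t) {s : ℝ≥0∞} (hs : s ≠ ∞) :
    (rpowE (ENNReal.ofReal t) s).toReal = t ^ s.toReal := by
  rw [rpowE, if_neg hs, ← ENNReal.toReal_rpow, ENNReal.toReal_ofReal ht]

theorem exists_balanced_rpow {x T ρ σ : ℝ} (hx : 0 < x) (hx₁ : x ≤ 1) (hT : 0 < T) (hT₁ : T ≤ 1)
    (hρ : 0 ≤ ρ) (hσ : 0 ≤ σ) :
    ∃ t, 0 < t ∧ t ≤ T ∧ t ^ (σ + 1) ≤ x ^ ((σ + 1) / (ρ + σ + 2)) ∧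
      t ^ (-(ρ + 1)) * x ≤ T ^ (-(ρ + 1)) * x ^ ((σ + 1) / (ρ + σ + 2)) := by
  set t₀ := x ^ (1 / (ρ + σ + 2))
  have ht₀ : 0 < t₀ := Real.rpow_pos_of_pos hx _
  refine ⟨min t₀ T, lt_min ht₀ hT, min_le_right _ _, ?_, ?_⟩
  · calc min t₀ T ^ (σ + 1) ≤ t₀ ^ (σ + 1) := by gcongr; exact min_le_left _ _
      _ = x ^ ((σ + 1) / (ρ + σ + 2)) := by rw [← Real.rpow_mul hx.le, one_div_mul_eq_div]
  rcases le_total t₀ T with h | h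
  · calc min t₀ T ^ (-(ρ + 1)) * x = x ^ (1 / (ρ + σ + 2) * -(ρ + 1) + 1) := by
          rw [min_eq_left h, ← Real.rpow_mul hx.le, ← Real.rpow_add_one hx.ne']
      _ = x ^ ((σ + 1) / (ρ + σ + 2)) := by
          congr 1
          field_simp
          ring
      _ ≤ T ^ (-(ρ + 1)) * x ^ ((σ + 1) / (ρ + σ + 2)) :=
          le_mul_of_one_le_left (by positivity)
            (Real.one_le_rpow_of_pos_of_le_one_of_nonpos hT hT₁ (by linarith))
  · rw [min_eq_right h]
    gcongr
    refine Real.self_le_rpow_of_le_one hx.le hx₁ ?_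
    rw [div_le_one (by positivity)]
    linarith

theorem exists_balanced_scale {x T ρ : ℝ} (hx : 0 < x) (hx₁ : x ≤ 1) (hT : 0 < T) (hT₁ : T < 1)
    (hρ : 0 ≤ ρ) (s : ℝ≥0∞) :
    ∃ t, 0 < t ∧ t ≤ T ∧ t * (rpowE (ENNReal.ofReal t) s).toReal ≤ x ^ entropyRate ρ s ∧
      t ^ (-(ρ + 1)) * x ≤ T ^ (-(ρ + 1)) * x ^ entropyRate ρ s := by
  by_cases hs : s = ∞
  · have hT_pow : rpowE (ENNReal.ofReal T) s = 0 := by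
      rw [rpowE, if_pos hs, if_pos (ENNReal.ofReal_lt_one.2 hT₁)]
    refine ⟨T, hT, le_rfl, ?_, ?_⟩
    · rw [hT_pow, ENNReal.toReal_zero, mul_zero]
      positivity
    · rw [entropyRate, if_pos hs, Real.rpow_one]
  · obtain ⟨t, ht, htT, hbias, hvar⟩ := exists_balanced_rpow hx hx₁ hT hT₁.le hρ s.toReal_nonneg
    rw [entropyRate, if_neg hs]
    refine ⟨t, ht, htT, ?_, hvar⟩
    rwa [rpowE_ofReal_toReal ht.le hs, mul_comm, ← Real.rpow_add_one ht.ne']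

theorem measureReal_margin_le {d : ℕ} {s τ : ℝ≥0∞} {α : ℝ} (hα : 0 ≤ α) {D : DataDist d}
    (hD : D ∈ Tsybakov d s α τ) {t : ℝ} (ht : 0 < t) (ht₁ : t < 1) (htτ : ENNReal.ofReal t ≤ τ) :
    D.Q.real {x | |D.regr x| ≤ t} ≤ α * (rpowE (ENNReal.ofReal t) s).toReal := by
  have hmargin := hD t ht htτ
  rw [measure_inter_conull (t := cube d) D.ae_mem_cube] at hmargin
  rw [← ENNReal.toReal_ofReal hα, ← ENNReal.toReal_mul]
  exact ENNReal.toReal_mono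
    (ENNReal.mul_ne_top ENNReal.ofReal_ne_top (rpowE_ofReal_lt_top ht₁ s).ne) hmargin

theorem HasNet.exists_estimator {d n : ℕ} (hn : 0 < n) {𝓕 : Set ((Fin d → ℝ) → ℝ)} {t L : ℝ}
    (h𝓕 : HasNet (cube d) 𝓕 (t / 2) L) (ht : 0 < t) (ht₁ : t ≤ 1) :
    ∃ A : Estimator d n, A.Meas ∧ ∀ D : DataDist d, (∃ f ∈ 𝓕, ∀ᵐ x ∂D.Q, D.η x = f x) →
      expectedExcess01 D.P A ≤ 3 * (t * D.Q.real {x | |D.regr x| ≤ t}) + 4 * (L / (t * n)) := by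
  obtain ⟨G, hne, hG, hcard, hcover⟩ := h𝓕
  obtain ⟨A, hA, hbound⟩ := exists_estimator_le hn hne hG
  refine ⟨A, hA, fun D ⟨f, hf, hηf⟩ => ?_⟩
  obtain ⟨g, hg, hfg⟩ := hcover f hf
  refine (hbound D t ht ht₁ ⟨g, hg, ?_⟩).trans (by gcongr)
  filter_upwards [hηf, D.ae_mem_cube] with x hx hx_cube
  exact hx ▸ hfg x hx_cube

theorem HasPolyEntropy.exists_estimator {d : ℕ} {𝓕 : Set ((Fin d → ℝ) → ℝ)} {ρ : ℝ}
    (h𝓕 : HasPolyEntropy (cube d) 𝓕 ρ) (hρ : 0 ≤ ρ) {α : ℝ} (hα : 0 < α) {τ : ℝ≥0∞}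
    (hτ : 0 < τ) :
    ∃ c : ℝ, 0 < c ∧ ∀ (s : ℝ≥0∞) (n : ℕ), 0 < n → ∃ A : Estimator d n, A.Meas ∧
      ∀ D ∈ Tsybakov d s α τ, (∃ f ∈ 𝓕, ∀ᵐ x ∂D.Q, D.η x = f x) →
        expectedExcess01 D.P A ≤ c * (1 / n : ℝ) ^ entropyRate ρ s := by
  obtain ⟨C, hC, hnet⟩ := h𝓕
  obtain ⟨T, -, hTτ⟩ := ENNReal.lt_iff_exists_real_btwn.1 (lt_min hτ one_pos)
  obtain ⟨hT₀, hTτ, hT₁⟩ : 0 < T ∧ ENNReal.ofReal T < τ ∧ T < 1 :=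
    ⟨ENNReal.ofReal_pos.1 hTτ.1, lt_min_iff.1 hTτ.2 |>.imp_right ENNReal.ofReal_lt_one.1⟩
  set B := 4 * C * 2 ^ ρ
  refine ⟨3 * α + B * T ^ (-(ρ + 1)), by positivity, fun s n hn => ?_⟩
  have hn₀ : (0 : ℝ) < n := by exact_mod_cast hn
  obtain ⟨t, ht, htT, hbias, hvar⟩ := exists_balanced_scale (x := 1 / n) (by positivity)
    ((div_le_one hn₀).2 (by exact_mod_cast hn)) hT₀ hT₁ hρ s
  obtain ⟨A, hA, hbound⟩ := (hnet (t / 2) (by positivity) (by linarith)).exists_estimator hn ht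
    (by linarith)
  have hlog : 4 * (C * (t / 2) ^ (-ρ) / (t * n)) = B * (t ^ (-(ρ + 1)) * (1 / n)) := by
    rw [Real.div_rpow ht.le zero_le_two, neg_add, Real.rpow_add ht, Real.rpow_neg_one,
      Real.rpow_neg zero_le_two]
    field_simp
    rfl
  refine ⟨A, hA, fun D hD hη => ?_⟩
  calc expectedExcess01 D.P A
      ≤ 3 * (t * D.Q.real {x | |D.regr x| ≤ t}) + 4 * (C * (t / 2) ^ (-ρ) / (t * n)) :=
        hbound D hη
    _ ≤ 3 * (t * (α * (rpowE (ENNReal.ofReal t) s).toReal)) + B * (t ^ (-(ρ + 1)) * (1 / n)) := by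
        rw [hlog]
        gcongr
        exact measureReal_margin_le hα.le hD ht (htT.trans_lt hT₁)
          ((ENNReal.ofReal_le_ofReal htT).trans hTτ.le)
    _ = 3 * α * (t * (rpowE (ENNReal.ofReal t) s).toReal) + B * (t ^ (-(ρ + 1)) * (1 / n)) := by
        ring
    _ ≤ 3 * α * (1 / n) ^ entropyRate ρ s + B * (T ^ (-(ρ + 1)) * (1 / n) ^ entropyRate ρ s) := by
        gcongr
    _ = (3 * α + B * T ^ (-(ρ + 1))) * (1 / n) ^ entropyRate ρ s := by ring

/-- Theorem 3.3 : an estimator achieving the minimax rate. -/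
theorem statement_4
    (d q K dmax dstar : ℕ) (hd : 0 < d) (hK : 0 < K) (hdmax : 0 < dmax) (hdstar : 0 < dstar)
    (β r α : ℝ) (hβ : 0 < β) (hr : 0 < r) (hα : 0 < α) (τ : ℝ≥0∞) (hτ : 0 < τ)
    (h1 : dstar ≤ d) (h2 : dstar * q ≤ K * q) (h3 : ¬(α < 1 ∧ 1 ≤ τ)) :
    ∃ c6 : ℝ, 0 < c6 ∧
      ∀ (s : ℝ≥0∞) (n : ℕ), 0 < n →
        ∃ A : Estimator d n, A.Meas ∧
          (⨆ D : ↥(HCHOM d q K dstar dmax β r ∩ Tsybakov d s α τ),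
              expectedExcess01 D.1.P A) ≤
            c6 * (1 / n : ℝ) ^ rateExp dstar (β * min 1 β ^ q) s := by
  have he : 0 < β * min 1 β ^ q := mul_pos hβ (pow_pos (lt_min one_pos hβ) q)
  obtain ⟨c, hc, hest⟩ := (GCHOM.hasPolyEntropy K dmax d q hdstar hβ hr.le).exists_estimator
    (by positivity) hα hτ
  refine ⟨c, hc, fun s n hn => ?_⟩
  obtain ⟨A, hA, hbound⟩ := hest s n hn
  refine ⟨A, hA, Real.iSup_le (fun ⟨D, hη, hD⟩ => ?_) (by positivity)⟩
  rw [rateExp_eq_entropyRate he]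
  exact hbound D hD hη

end ZZS
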